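/- arXiv:nlin/0004008 — 10 statements merged into one kernel-verified Lean document; each statement's English description precedes it below -/
import Mathlib

section
/- Let n ∈ ℕ₀ and let u, v, u⁎, v⁎ : Ω → ℂ and the z-polynomials F, G, H (of z-degrees n, n+1, n, with differentiable coefficient functions on Ω and leading G-coefficient g₀ ≡ 1) be given. For ζ ∈ ℂ\{0} and z = ζ² define the 2×2 matrices U(ζ,x,t) = i[[z − v v⁎, 2ζ v],[2ζ v⁎, −z + v v⁎]], V(ζ,x,t) = i[[−G(z,x,t), ζ F(z,x,t)],[−ζ H(z,x,t), G(z,x,t)]], W(ζ,x,t) = i[[z⁻¹ − u u⁎, 2ζ⁻¹ u],[2ζ⁻¹ u⁎, −z⁻¹ + u u⁎]]. Then the zero-curvature equations −V_x(ζ,x,t) + [U(ζ,x,t), V(ζ,x,t)] = 0 and −V_t(ζ,x,t) + [W(ζ,x,t), V(ζ,x,t)] = 0 hold for all ζ ∈ ℂ\{0} and all (x,t) ∈ Ω if and only if the six equations of the Thirring polynomial system hold as identities in z ∈ ℂ and (x,t) ∈ Ω. -/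
/-!
The traceless matrix `-V_x + [U,V]` has three independent entries. Up to the nonzero factors `I`,
`ζ` they are the equations for `G_x`, `F_x`, `H_x` at `z = ζ ^ 2`; in the same way
`-V_t + [W,V]` gives the `t`-equations at `z = ζ ^ 2`, up to powers of `ζ`
(`curvX_iff`, `curvT_iff`). Since every nonzero `z` is a square `ζ ^ 2` with `ζ ≠ 0`, the
zero-curvature equations are equivalent to the polynomial system for all `z ≠ 0`. Both sides of
each equation of the system are polynomial in `z` (the coefficients being differentiable), hence
continuous in `z`, so the equations extend from the dense set `z ≠ 0` to `z = 0`.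
-/

noncomputable section

open Complex

/-- Partial derivative of a function of two real variables with respect to
the first (the `x`) variable. -/
def pdx (f : ℝ → ℝ → ℂ) (x t : ℝ) : ℂ := deriv (fun x' => f x' t) x

/-- Partial derivative of a function of two real variables with respect to
the second (the `t`) variable. -/
def pdt (f : ℝ → ℝ → ℂ) (x t : ℝ) : ℂ := deriv (fun t' => f x t') t

/-- The data of the Thirring polynomial setup: functions `u, v, u⁎, v⁎` on `Ω ⊆ ℝ²`
and the coefficients of the `z`-polynomials `F`, `H` (degree `n`) and `G`
(degree `n+1`, with leading coefficient `gc 0 ≡ 1`), all coefficients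
differentiable on `Ω` in each variable. -/
structure ThirringData (n : ℕ) (Ω : Set (ℝ × ℝ)) where
  u : ℝ → ℝ → ℂ
  v : ℝ → ℝ → ℂ
  us : ℝ → ℝ → ℂ
  vs : ℝ → ℝ → ℂ
  f : ℕ → ℝ → ℝ → ℂ
  h : ℕ → ℝ → ℝ → ℂ
  gc : ℕ → ℝ → ℝ → ℂ
  hg0 : ∀ x t : ℝ, gc 0 x t = 1
  f_diff_x : ∀ (j : ℕ) (x t : ℝ), (x, t) ∈ Ω → DifferentiableAt ℝ (fun x' => f j x' t) x
  f_diff_t : ∀ (j : ℕ) (x t : ℝ), (x, t) ∈ Ω → DifferentiableAt ℝ (fun t' => f j x t') t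
  h_diff_x : ∀ (j : ℕ) (x t : ℝ), (x, t) ∈ Ω → DifferentiableAt ℝ (fun x' => h j x' t) x
  h_diff_t : ∀ (j : ℕ) (x t : ℝ), (x, t) ∈ Ω → DifferentiableAt ℝ (fun t' => h j x t') t
  gc_diff_x : ∀ (j : ℕ) (x t : ℝ), (x, t) ∈ Ω → DifferentiableAt ℝ (fun x' => gc j x' t) x
  gc_diff_t : ∀ (j : ℕ) (x t : ℝ), (x, t) ∈ Ω → DifferentiableAt ℝ (fun t' => gc j x t') t

namespace ThirringData

variable {n : ℕ} {Ω : Set (ℝ × ℝ)}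

/-- `F(z,x,t) = Σ_{j=0}^n f_{n-j}(x,t) z^j`. -/
def F (S : ThirringData n Ω) (z : ℂ) (x t : ℝ) : ℂ :=
  ∑ j ∈ Finset.range (n + 1), S.f (n - j) x t * z ^ j

/-- `H(z,x,t) = Σ_{j=0}^n h_{n-j}(x,t) z^j`. -/
def Hp (S : ThirringData n Ω) (z : ℂ) (x t : ℝ) : ℂ :=
  ∑ j ∈ Finset.range (n + 1), S.h (n - j) x t * z ^ j

/-- `G(z,x,t) = Σ_{j=0}^{n+1} g_{n+1-j}(x,t) z^j`. -/
def G (S : ThirringData n Ω) (z : ℂ) (x t : ℝ) : ℂ :=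
  ∑ j ∈ Finset.range (n + 2), S.gc (n + 1 - j) x t * z ^ j

/-- The six equations of the Thirring polynomial system, as identities in
`z ∈ ℂ` and `(x,t) ∈ Ω`. -/
def System (S : ThirringData n Ω) : Prop :=
  (∀ (z : ℂ) (x t : ℝ), (x, t) ∈ Ω →
    pdx (S.F z) x t =
      -2 * I * (S.v x t * S.vs x t - z) * S.F z x t + 4 * I * S.v x t * S.G z x t) ∧
  (∀ (z : ℂ) (x t : ℝ), (x, t) ∈ Ω →
    pdx (S.G z) x t = 2 * I * z * (S.vs x t * S.F z x t + S.v x t * S.Hp z x t)) ∧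
  (∀ (z : ℂ) (x t : ℝ), (x, t) ∈ Ω →
    pdx (S.Hp z) x t =
      2 * I * (S.v x t * S.vs x t - z) * S.Hp z x t + 4 * I * S.vs x t * S.G z x t) ∧
  (∀ (z : ℂ) (x t : ℝ), (x, t) ∈ Ω →
    z * pdt (S.F z) x t =
      -2 * I * (z * S.u x t * S.us x t - 1) * S.F z x t + 4 * I * S.u x t * S.G z x t) ∧
  (∀ (z : ℂ) (x t : ℝ), (x, t) ∈ Ω →
    pdt (S.G z) x t = 2 * I * (S.us x t * S.F z x t + S.u x t * S.Hp z x t)) ∧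
  (∀ (z : ℂ) (x t : ℝ), (x, t) ∈ Ω →
    z * pdt (S.Hp z) x t =
      2 * I * (z * S.u x t * S.us x t - 1) * S.Hp z x t + 4 * I * S.us x t * S.G z x t)

end ThirringData
namespace ThirringData

variable {n : ℕ} {Ω : Set (ℝ × ℝ)}

/-- The matrix `U(ζ,x,t)`, with `z = ζ²`. -/
def Umat (S : ThirringData n Ω) (ζ : ℂ) (x t : ℝ) : Matrix (Fin 2) (Fin 2) ℂ :=
  I • !![ζ ^ 2 - S.v x t * S.vs x t, 2 * ζ * S.v x t;
         2 * ζ * S.vs x t, -ζ ^ 2 + S.v x t * S.vs x t]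

/-- The matrix `V(ζ,x,t)`, with `z = ζ²`. -/
def Vmat (S : ThirringData n Ω) (ζ : ℂ) (x t : ℝ) : Matrix (Fin 2) (Fin 2) ℂ :=
  I • !![-(S.G (ζ ^ 2) x t), ζ * S.F (ζ ^ 2) x t;
         -(ζ * S.Hp (ζ ^ 2) x t), S.G (ζ ^ 2) x t]

/-- The matrix `W(ζ,x,t)` (denoted `Ṽ` in the paper), with `z = ζ²`. -/
def Wmat (S : ThirringData n Ω) (ζ : ℂ) (x t : ℝ) : Matrix (Fin 2) (Fin 2) ℂ :=
  I • !![(ζ ^ 2)⁻¹ - S.u x t * S.us x t, 2 * ζ⁻¹ * S.u x t;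
         2 * ζ⁻¹ * S.us x t, -(ζ ^ 2)⁻¹ + S.u x t * S.us x t]

/-- Entrywise partial `x`-derivative of `V(ζ,·,·)`. -/
def VmatX (S : ThirringData n Ω) (ζ : ℂ) (x t : ℝ) : Matrix (Fin 2) (Fin 2) ℂ :=
  Matrix.of fun i j => deriv (fun x' => Vmat S ζ x' t i j) x

/-- Entrywise partial `t`-derivative of `V(ζ,·,·)`. -/
def VmatT (S : ThirringData n Ω) (ζ : ℂ) (x t : ℝ) : Matrix (Fin 2) (Fin 2) ℂ :=
  Matrix.of fun i j => deriv (fun t' => Vmat S ζ x t' i j) t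

end ThirringData

/-- The derivative in a parameter of a polynomial in `z` is continuous in `z`, because it may be
computed coefficientwise. -/
lemma continuous_deriv_sum (N : ℕ) (c : ℕ → ℝ → ℂ) (s : ℝ)
    (hc : ∀ j, DifferentiableAt ℝ (c j) s) :
    Continuous fun z : ℂ => deriv (fun s' => ∑ j ∈ Finset.range N, c j s' * z ^ j) s := by
  have h : ∀ z : ℂ, deriv (fun s' => ∑ j ∈ Finset.range N, c j s' * z ^ j) s =
      ∑ j ∈ Finset.range N, deriv (c j) s * z ^ j := fun z =>
    (HasDerivAt.fun_sum fun j _ => (hc j).hasDerivAt.mul_const (z ^ j)).deriv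
  simp only [h]
  fun_prop

/-- Two continuous functions on `ℂ` that agree at all nonzero squares agree everywhere. -/
lemma eq_of_eq_sq {p q : ℂ → ℂ} (hp : Continuous p) (hq : Continuous q)
    (h : ∀ ζ : ℂ, ζ ≠ 0 → p (ζ ^ 2) = q (ζ ^ 2)) : ∀ z, p z = q z := by
  refine congrFun (hp.ext_on (dense_compl_singleton (0 : ℂ)) hq fun w hw => ?_)
  obtain ⟨ζ, rfl⟩ := IsAlgClosed.exists_pow_nat_eq w two_pos
  exact h ζ fun h0 => hw (by simp [h0])

namespace ThirringData

variable {n : ℕ} {Ω : Set (ℝ × ℝ)}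

lemma continuous_F (S : ThirringData n Ω) (x t : ℝ) : Continuous fun z => S.F z x t := by
  unfold F; fun_prop

lemma continuous_Hp (S : ThirringData n Ω) (x t : ℝ) : Continuous fun z => S.Hp z x t := by
  unfold Hp; fun_prop

lemma continuous_G (S : ThirringData n Ω) (x t : ℝ) : Continuous fun z => S.G z x t := by
  unfold G; fun_prop

lemma VmatX_eq (S : ThirringData n Ω) (ζ : ℂ) (x t : ℝ) :
    S.VmatX ζ x t = I • !![-(pdx (S.G (ζ ^ 2)) x t), ζ * pdx (S.F (ζ ^ 2)) x t;
      -(ζ * pdx (S.Hp (ζ ^ 2)) x t), pdx (S.G (ζ ^ 2)) x t] := by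
  ext i j
  fin_cases i <;> fin_cases j <;> simp [VmatX, Vmat, pdx, deriv_const_mul_field]

lemma VmatT_eq (S : ThirringData n Ω) (ζ : ℂ) (x t : ℝ) :
    S.VmatT ζ x t = I • !![-(pdt (S.G (ζ ^ 2)) x t), ζ * pdt (S.F (ζ ^ 2)) x t;
      -(ζ * pdt (S.Hp (ζ ^ 2)) x t), pdt (S.G (ζ ^ 2)) x t] := by
  ext i j
  fin_cases i <;> fin_cases j <;> simp [VmatT, Vmat, pdt, deriv_const_mul_field]

/-- The commutator form of a zero-curvature equation, in terms of matrix entries: here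
`I • !![a, b; c, -a]` stands for `U` or `W`, and `g'`, `f'`, `h'` for the derivatives of
`G`, `F`, `H`. -/
lemma curv_iff (a b c f g h f' g' h' ζ : ℂ) :
    -(I • !![-g', ζ * f'; -(ζ * h'), g']) +
      ((I • !![a, b; c, -a]) * (I • !![-g, ζ * f; -(ζ * h), g]) -
        (I • !![-g, ζ * f; -(ζ * h), g]) * (I • !![a, b; c, -a])) = 0 ↔
    ζ * f' = I * (2 * a * (ζ * f) + 2 * b * g) ∧ g' = I * ζ * (b * h + c * f) ∧
      ζ * h' = I * (-2 * a * (ζ * h) + 2 * c * g) := by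
  have hI : I * I = -1 := I_mul_I
  constructor
  · intro h0
    have h00 := congrFun (congrFun h0 0) 0
    have h01 := congrFun (congrFun h0 0) 1
    have h10 := congrFun (congrFun h0 1) 0
    simp at h00 h01 h10
    refine ⟨?_, ?_, ?_⟩
    · linear_combination I * h01 + (ζ * f' - I * (2 * a * (ζ * f) + 2 * b * g)) * hI
    · linear_combination -I * h00 + (g' - I * ζ * (b * h + c * f)) * hI
    · linear_combination -I * h10 + (ζ * h' - I * (-2 * a * (ζ * h) + 2 * c * g)) * hI
  · rintro ⟨h1, h2, h3⟩
    ext i j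
    fin_cases i <;> fin_cases j <;> simp
    · linear_combination I * h2
    · linear_combination -I * h1
    · linear_combination I * h3
    · linear_combination -I * h2

lemma curvX_iff (S : ThirringData n Ω) {ζ : ℂ} (hζ : ζ ≠ 0) (x t : ℝ) :
    -(S.VmatX ζ x t) + (S.Umat ζ x t * S.Vmat ζ x t - S.Vmat ζ x t * S.Umat ζ x t) = 0 ↔
    pdx (S.F (ζ ^ 2)) x t = -2 * I * (S.v x t * S.vs x t - ζ ^ 2) * S.F (ζ ^ 2) x t +
        4 * I * S.v x t * S.G (ζ ^ 2) x t ∧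
    pdx (S.G (ζ ^ 2)) x t =
        2 * I * ζ ^ 2 * (S.vs x t * S.F (ζ ^ 2) x t + S.v x t * S.Hp (ζ ^ 2) x t) ∧
    pdx (S.Hp (ζ ^ 2)) x t = 2 * I * (S.v x t * S.vs x t - ζ ^ 2) * S.Hp (ζ ^ 2) x t +
        4 * I * S.vs x t * S.G (ζ ^ 2) x t := by
  have hU : S.Umat ζ x t = I • !![ζ ^ 2 - S.v x t * S.vs x t, 2 * ζ * S.v x t;
      2 * ζ * S.vs x t, -(ζ ^ 2 - S.v x t * S.vs x t)] := by
    rw [Umat, neg_sub', sub_neg_eq_add]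
  rw [VmatX_eq, hU, Vmat, curv_iff]
  refine and_congr ?_ (and_congr ?_ ?_)
  · rw [← mul_right_inj' hζ (b := pdx (S.F (ζ ^ 2)) x t)]; ring_nf
  · ring_nf
  · rw [← mul_right_inj' hζ (b := pdx (S.Hp (ζ ^ 2)) x t)]; ring_nf

lemma curvT_iff (S : ThirringData n Ω) {ζ : ℂ} (hζ : ζ ≠ 0) (x t : ℝ) :
    -(S.VmatT ζ x t) + (S.Wmat ζ x t * S.Vmat ζ x t - S.Vmat ζ x t * S.Wmat ζ x t) = 0 ↔
    ζ ^ 2 * pdt (S.F (ζ ^ 2)) x t =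
      -2 * I * (ζ ^ 2 * S.u x t * S.us x t - 1) * S.F (ζ ^ 2) x t +
        4 * I * S.u x t * S.G (ζ ^ 2) x t ∧
    pdt (S.G (ζ ^ 2)) x t =
        2 * I * (S.us x t * S.F (ζ ^ 2) x t + S.u x t * S.Hp (ζ ^ 2) x t) ∧
    ζ ^ 2 * pdt (S.Hp (ζ ^ 2)) x t =
      2 * I * (ζ ^ 2 * S.u x t * S.us x t - 1) * S.Hp (ζ ^ 2) x t +
        4 * I * S.us x t * S.G (ζ ^ 2) x t := by
  have hW : S.Wmat ζ x t = I • !![(ζ ^ 2)⁻¹ - S.u x t * S.us x t, 2 * ζ⁻¹ * S.u x t;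
      2 * ζ⁻¹ * S.us x t, -((ζ ^ 2)⁻¹ - S.u x t * S.us x t)] := by
    rw [Wmat, neg_sub', sub_neg_eq_add]
  have e : ζ * ζ⁻¹ = 1 := mul_inv_cancel₀ hζ
  rw [VmatT_eq, hW, Vmat, curv_iff]
  refine and_congr ?_ (and_congr ?_ ?_)
  · rw [← mul_right_inj' hζ]
    refine Eq.congr (by ring) ?_
    field_simp
    ring
  · refine Eq.congr rfl ?_
    field_simp
    ring
  · rw [← mul_right_inj' hζ]
    refine Eq.congr (by ring) ?_
    field_simp
    ring

end ThirringData

/-- the zero-curvature equations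
`-V_x + [U,V] = 0` and `-V_t + [W,V] = 0` (for all `ζ ≠ 0` and `(x,t) ∈ Ω`)
hold if and only if the six equations of the Thirring polynomial system hold
as identities in `z ∈ ℂ` and `(x,t) ∈ Ω`. -/
theorem statement0 {n : ℕ} {Ω : Set (ℝ × ℝ)} (hΩ : IsOpen Ω) (S : ThirringData n Ω) :
    (∀ ζ : ℂ, ζ ≠ 0 → ∀ x t : ℝ, (x, t) ∈ Ω →
      -(S.VmatX ζ x t) + (S.Umat ζ x t * S.Vmat ζ x t - S.Vmat ζ x t * S.Umat ζ x t) = 0 ∧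
      -(S.VmatT ζ x t) + (S.Wmat ζ x t * S.Vmat ζ x t - S.Vmat ζ x t * S.Wmat ζ x t) = 0)
    ↔ S.System := by
  constructor
  · intro hz
    have hX := fun (x t : ℝ) (hxt : (x, t) ∈ Ω) (ζ : ℂ) (hζ : ζ ≠ 0) =>
      (S.curvX_iff hζ x t).1 (hz ζ hζ x t hxt).1
    have hT := fun (x t : ℝ) (hxt : (x, t) ∈ Ω) (ζ : ℂ) (hζ : ζ ≠ 0) =>
      (S.curvT_iff hζ x t).1 (hz ζ hζ x t hxt).2
    have cF := S.continuous_F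
    have cG := S.continuous_G
    have cH := S.continuous_Hp
    refine ⟨fun z x t hxt => ?_, fun z x t hxt => ?_, fun z x t hxt => ?_,
      fun z x t hxt => ?_, fun z x t hxt => ?_, fun z x t hxt => ?_⟩ <;> revert z
    · exact eq_of_eq_sq
        (continuous_deriv_sum _ (fun j x' => S.f (n - j) x' t) x
          fun j => S.f_diff_x _ x t hxt)
        (by fun_prop) (fun ζ hζ => (hX x t hxt ζ hζ).1)
    · exact eq_of_eq_sq
        (continuous_deriv_sum _ (fun j x' => S.gc (n + 1 - j) x' t) x
          fun j => S.gc_diff_x _ x t hxt)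
        (by fun_prop) (fun ζ hζ => (hX x t hxt ζ hζ).2.1)
    · exact eq_of_eq_sq
        (continuous_deriv_sum _ (fun j x' => S.h (n - j) x' t) x
          fun j => S.h_diff_x _ x t hxt)
        (by fun_prop) (fun ζ hζ => (hX x t hxt ζ hζ).2.2)
    · exact eq_of_eq_sq
        (continuous_id.mul (continuous_deriv_sum _ (fun j t' => S.f (n - j) x t') t
          fun j => S.f_diff_t _ x t hxt))
        (by fun_prop) (fun ζ hζ => (hT x t hxt ζ hζ).1)
    · exact eq_of_eq_sq
        (continuous_deriv_sum _ (fun j t' => S.gc (n + 1 - j) x t') t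
          fun j => S.gc_diff_t _ x t hxt)
        (by fun_prop) (fun ζ hζ => (hT x t hxt ζ hζ).2.1)
    · exact eq_of_eq_sq
        (continuous_id.mul (continuous_deriv_sum _ (fun j t' => S.h (n - j) x t') t
          fun j => S.h_diff_t _ x t hxt))
        (by fun_prop) (fun ζ hζ => (hT x t hxt ζ hζ).2.2)
  · rintro ⟨h1, h2, h3, h4, h5, h6⟩ ζ hζ x t hxt
    exact ⟨(S.curvX_iff hζ x t).2 ⟨h1 _ x t hxt, h2 _ x t hxt, h3 _ x t hxt⟩,
      (S.curvT_iff hζ x t).2 ⟨h4 _ x t hxt, h5 _ x t hxt, h6 _ x t hxt⟩⟩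
end
end

section
/- Assume the Thirring polynomial system holds on Ω. Then for every fixed z ∈ ℂ the function (x,t) ↦ G(z,x,t)² − z F(z,x,t) H(z,x,t) has vanishing partial derivatives with respect to both x and t on Ω. Consequently, if Ω is connected, there is a monic polynomial R of degree 2n+2 in z, independent of (x,t), such that G(z,x,t)² − z F(z,x,t) H(z,x,t) = R(z) for all z ∈ ℂ and (x,t) ∈ Ω. -/
/-!
Differentiating `G ^ 2 - z F H` and substituting the system, the terms containing `v v⁎ - z` (for
`x`) or `z u u⁎ - 1` (for `t`) occur with opposite signs in the equations for `F` and `H` and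
cancel, while the derivative of `G ^ 2` cancels what is left.  So both partial derivatives vanish
(`deriv_x_eq_zero`, `deriv_t_eq_zero`).

The coefficients are only assumed separately differentiable, so no total derivative is available.
Instead, every point of `Ω` has a neighbourhood `ball × ball` in `Ω`, each point of which is joined
to the centre by one horizontal and one vertical segment; hence the function is locally constant,
and constant when `Ω` is connected (`eq_of_partial_deriv_eq_zero`).

The polynomial `R` is obtained by freezing the coefficients at a point of `Ω`.  There `G` is
monic of degree `n + 1` and `F`, `H` have degree at most `n`, so `z F H` has degree at most
`2 n + 1` and does not affect the leading term of `G ^ 2` (`monic_sq_sub`).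
-/

noncomputable section

open Complex

namespace ThirringData

variable {n : ℕ} {Ω : Set (ℝ × ℝ)}

lemma F_differentiableAt_x (S : ThirringData n Ω) (z : ℂ) {x t : ℝ} (hp : (x, t) ∈ Ω) :
    DifferentiableAt ℝ (fun x' => S.F z x' t) x :=
  DifferentiableAt.fun_sum fun _ _ => (S.f_diff_x _ x t hp).mul_const _

lemma F_differentiableAt_t (S : ThirringData n Ω) (z : ℂ) {x t : ℝ} (hp : (x, t) ∈ Ω) :
    DifferentiableAt ℝ (fun t' => S.F z x t') t :=
  DifferentiableAt.fun_sum fun _ _ => (S.f_diff_t _ x t hp).mul_const _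

lemma Hp_differentiableAt_x (S : ThirringData n Ω) (z : ℂ) {x t : ℝ} (hp : (x, t) ∈ Ω) :
    DifferentiableAt ℝ (fun x' => S.Hp z x' t) x :=
  DifferentiableAt.fun_sum fun _ _ => (S.h_diff_x _ x t hp).mul_const _

lemma Hp_differentiableAt_t (S : ThirringData n Ω) (z : ℂ) {x t : ℝ} (hp : (x, t) ∈ Ω) :
    DifferentiableAt ℝ (fun t' => S.Hp z x t') t :=
  DifferentiableAt.fun_sum fun _ _ => (S.h_diff_t _ x t hp).mul_const _

lemma G_differentiableAt_x (S : ThirringData n Ω) (z : ℂ) {x t : ℝ} (hp : (x, t) ∈ Ω) :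
    DifferentiableAt ℝ (fun x' => S.G z x' t) x :=
  DifferentiableAt.fun_sum fun _ _ => (S.gc_diff_x _ x t hp).mul_const _

lemma G_differentiableAt_t (S : ThirringData n Ω) (z : ℂ) {x t : ℝ} (hp : (x, t) ∈ Ω) :
    DifferentiableAt ℝ (fun t' => S.G z x t') t :=
  DifferentiableAt.fun_sum fun _ _ => (S.gc_diff_t _ x t hp).mul_const _

end ThirringData

lemma hasDerivAt_sq_sub {f g h : ℝ → ℂ} {x : ℝ} (z : ℂ) (hf : DifferentiableAt ℝ f x)
    (hg : DifferentiableAt ℝ g x) (hh : DifferentiableAt ℝ h x) :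
    HasDerivAt (fun y => g y ^ 2 - z * f y * h y)
      (2 * g x * deriv g x - (z * deriv f x * h x + z * f x * deriv h x)) x := by
  simpa using (hg.hasDerivAt.fun_pow 2).fun_sub
    ((hf.hasDerivAt.const_mul z).fun_mul hh.hasDerivAt)

namespace ThirringData

variable {n : ℕ} {Ω : Set (ℝ × ℝ)}

lemma deriv_x_eq_zero (S : ThirringData n Ω) (hsys : S.System) (z : ℂ) {x t : ℝ}
    (hp : (x, t) ∈ Ω) :
    deriv (fun x' => S.G z x' t ^ 2 - z * S.F z x' t * S.Hp z x' t) x = 0 := by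
  obtain ⟨hF, hG, hH, -, -, -⟩ := hsys
  have hF := hF z x t hp
  have hG := hG z x t hp
  have hH := hH z x t hp
  simp only [pdx] at hF hG hH
  rw [(hasDerivAt_sq_sub z (S.F_differentiableAt_x z hp) (S.G_differentiableAt_x z hp)
    (S.Hp_differentiableAt_x z hp)).deriv, hF, hG, hH]
  ring

lemma deriv_t_eq_zero (S : ThirringData n Ω) (hsys : S.System) (z : ℂ) {x t : ℝ}
    (hp : (x, t) ∈ Ω) :
    deriv (fun t' => S.G z x t' ^ 2 - z * S.F z x t' * S.Hp z x t') t = 0 := by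
  obtain ⟨-, -, -, hF, hG, hH⟩ := hsys
  have hF := hF z x t hp
  have hG := hG z x t hp
  have hH := hH z x t hp
  simp only [pdt] at hF hG hH
  rw [(hasDerivAt_sq_sub z (S.F_differentiableAt_t z hp) (S.G_differentiableAt_t z hp)
    (S.Hp_differentiableAt_t z hp)).deriv, hG]
  -- `F_t` and `H_t` occur only as `z F_t` and `z H_t`, the combinations given by the system, so
  -- there is no division by `z` and `z = 0` is covered as well
  linear_combination (-S.Hp z x t) * hF - S.F z x t * hH

end ThirringData

/-- A function on a connected open subset of the plane that is separately differentiable with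
vanishing partial derivatives is constant; no joint regularity is needed. -/
lemma eq_of_partial_deriv_eq_zero {Ω : Set (ℝ × ℝ)} (hΩ : IsOpen Ω) (hc : IsPreconnected Ω)
    {φ : ℝ → ℝ → ℂ}
    (hx : ∀ x t, (x, t) ∈ Ω → DifferentiableAt ℝ (fun x' => φ x' t) x)
    (ht : ∀ x t, (x, t) ∈ Ω → DifferentiableAt ℝ (fun t' => φ x t') t)
    (hx0 : ∀ x t, (x, t) ∈ Ω → deriv (fun x' => φ x' t) x = 0)
    (ht0 : ∀ x t, (x, t) ∈ Ω → deriv (fun t' => φ x t') t = 0)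
    {p q : ℝ × ℝ} (hp : p ∈ Ω) (hq : q ∈ Ω) : φ p.1 p.2 = φ q.1 q.2 := by
  have := isPreconnected_iff_preconnectedSpace.1 hc
  have key : IsLocallyConstant (fun r : Ω => φ r.1.1 r.1.2) := by
    rw [IsLocallyConstant.iff_eventually_eq]
    rintro ⟨⟨a, b⟩, hab⟩
    obtain ⟨ε, hε, hball⟩ := Metric.isOpen_iff.1 hΩ _ hab
    rw [← ball_prod_same] at hball
    have hnhds : ∀ᶠ r in nhds (a, b), r ∈ Metric.ball a ε ×ˢ Metric.ball b ε :=
      prod_mem_nhds (Metric.ball_mem_nhds a hε) (Metric.ball_mem_nhds b hε)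
    filter_upwards [continuous_subtype_val.continuousAt.eventually hnhds]
    rintro ⟨⟨c, d⟩, hcd⟩ ⟨hc', hd'⟩
    have ha := Metric.mem_ball_self (x := a) hε
    have hb := Metric.mem_ball_self (x := b) hε
    -- the path from `(c, d)` to `(a, b)` goes through the corner `(a, d)`
    have h1 : φ c d = φ a d :=
      Metric.isOpen_ball.is_const_of_deriv_eq_zero (f := fun x' => φ x' d)
        (convex_ball a ε).isPreconnected
        (fun y hy => (hx y d (hball ⟨hy, hd'⟩)).differentiableWithinAt)
        (fun y hy => hx0 y d (hball ⟨hy, hd'⟩)) hc' ha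
    have h2 : φ a d = φ a b :=
      Metric.isOpen_ball.is_const_of_deriv_eq_zero (f := fun t' => φ a t')
        (convex_ball b ε).isPreconnected
        (fun y hy => (ht a y (hball ⟨ha, hy⟩)).differentiableWithinAt)
        (fun y hy => ht0 a y (hball ⟨ha, hy⟩)) hd' hb
    exact h1.trans h2
  exact key.apply_eq_of_preconnectedSpace ⟨p, hp⟩ ⟨q, hq⟩

open Polynomial in
lemma degree_sum_C_mul_X_pow_lt (m : ℕ) (c : ℕ → ℂ) :
    (∑ j ∈ Finset.range m, C (c j) * X ^ j : ℂ[X]).degree < m := by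
  rw [← mem_degreeLT]
  refine Submodule.sum_mem _ fun j hj => mem_degreeLT.2 ?_
  exact (degree_C_mul_X_pow_le _ _).trans_lt (by exact_mod_cast Finset.mem_range.1 hj)

open Polynomial in
/-- The leading term of `g ^ 2 - X f h` is that of `g ^ 2`, because `X f h` has degree at most
`2 n + 1`. -/
lemma monic_sq_sub {n : ℕ} {f g h : ℂ[X]} (hg : g.Monic) (hgd : g.natDegree = n + 1)
    (hf : f.degree < (n + 1 : ℕ)) (hh : h.degree < (n + 1 : ℕ)) :
    (g ^ 2 - X * f * h).Monic ∧ (g ^ 2 - X * f * h).natDegree = 2 * n + 2 := by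
  have key : ∀ p : ℂ[X], p.degree < (n + 1 : ℕ) → p.natDegree ≤ n := fun p hp =>
    natDegree_le_iff_coeff_eq_zero.2 fun N hN => (degree_lt_iff_coeff_zero p (n + 1)).1 hp N hN
  have hf' := key f hf
  have hh' := key h hh
  have hsq : (g ^ 2).natDegree = 2 * n + 2 := by rw [hg.natDegree_pow, hgd]; ring
  have hlt : (X * f * h).natDegree < (g ^ 2).natDegree := by
    have h1 := natDegree_mul_le (p := X * f) (q := h)
    have h2 := natDegree_mul_le (p := (X : ℂ[X])) (q := f)
    rw [natDegree_X] at h2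
    omega
  exact ⟨(hg.pow 2).sub_of_left (degree_lt_degree hlt),
    (natDegree_sub_eq_left_of_natDegree_lt hlt).trans hsq⟩

/-- if the Thirring polynomial system holds on `Ω`, then for each
fixed `z` the function `(x,t) ↦ G² - zFH` has vanishing partial derivatives on
`Ω`; consequently, if `Ω` is connected, `G² - zFH = R(z)` for a monic
polynomial `R` of degree `2n+2` independent of `(x,t)`. -/
theorem statement1 {n : ℕ} {Ω : Set (ℝ × ℝ)} (hΩ : IsOpen Ω)
    (S : ThirringData n Ω) (hsys : S.System) :
    (∀ (z : ℂ) (x t : ℝ), (x, t) ∈ Ω →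
      deriv (fun x' => S.G z x' t ^ 2 - z * S.F z x' t * S.Hp z x' t) x = 0 ∧
      deriv (fun t' => S.G z x t' ^ 2 - z * S.F z x t' * S.Hp z x t') t = 0) ∧
    (IsConnected Ω →
      ∃ R : Polynomial ℂ, R.Monic ∧ R.natDegree = 2 * n + 2 ∧
        ∀ (z : ℂ) (x t : ℝ), (x, t) ∈ Ω →
          S.G z x t ^ 2 - z * S.F z x t * S.Hp z x t = R.eval z) := by
  refine ⟨fun z x t hp => ⟨S.deriv_x_eq_zero hsys z hp, S.deriv_t_eq_zero hsys z hp⟩, ?_⟩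
  rintro ⟨⟨⟨a, b⟩, hab⟩, hconn⟩
  let pF : Polynomial ℂ := ∑ j ∈ Finset.range (n + 1),
    Polynomial.C (S.f (n - j) a b) * Polynomial.X ^ j
  let pH : Polynomial ℂ := ∑ j ∈ Finset.range (n + 1),
    Polynomial.C (S.h (n - j) a b) * Polynomial.X ^ j
  let pG : Polynomial ℂ := ∑ j ∈ Finset.range (n + 2),
    Polynomial.C (S.gc (n + 1 - j) a b) * Polynomial.X ^ j
  have hlow := degree_sum_C_mul_X_pow_lt (n + 1) fun j => S.gc (n + 1 - j) a b
  have hpG : pG = Polynomial.X ^ (n + 1) + ∑ j ∈ Finset.range (n + 1),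
      Polynomial.C (S.gc (n + 1 - j) a b) * Polynomial.X ^ j := by
    simp only [pG]
    rw [Finset.sum_range_succ, Nat.sub_self, S.hg0, map_one, one_mul, add_comm]
  have hmonic : pG.Monic := by
    rw [hpG]
    exact (Polynomial.monic_X_pow _).add_of_left (by rwa [Polynomial.degree_X_pow])
  have hdeg : pG.natDegree = n + 1 := by
    rw [hpG, Polynomial.natDegree_add_eq_left_of_degree_lt, Polynomial.natDegree_X_pow]
    rwa [Polynomial.degree_X_pow]
  obtain ⟨hR, hRd⟩ := monic_sq_sub hmonic hdeg
    (degree_sum_C_mul_X_pow_lt (n + 1) fun j => S.f (n - j) a b)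
    (degree_sum_C_mul_X_pow_lt (n + 1) fun j => S.h (n - j) a b)
  refine ⟨pG ^ 2 - Polynomial.X * pF * pH, hR, hRd, fun z x t hp => ?_⟩
  have heval : (pG ^ 2 - Polynomial.X * pF * pH).eval z =
      S.G z a b ^ 2 - z * S.F z a b * S.Hp z a b := by
    simp [pG, pF, pH, ThirringData.G, ThirringData.F, ThirringData.Hp,
      Polynomial.eval_finsetSum]
  rw [heval]
  exact eq_of_partial_deriv_eq_zero hΩ hconn
    (φ := fun x t => S.G z x t ^ 2 - z * S.F z x t * S.Hp z x t)
    (fun x t h => (hasDerivAt_sq_sub z (S.F_differentiableAt_x z h)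
      (S.G_differentiableAt_x z h) (S.Hp_differentiableAt_x z h)).differentiableAt)
    (fun x t h => (hasDerivAt_sq_sub z (S.F_differentiableAt_t z h)
      (S.G_differentiableAt_t z h) (S.Hp_differentiableAt_t z h)).differentiableAt)
    (fun x t h => S.deriv_x_eq_zero hsys z h) (fun x t h => S.deriv_t_eq_zero hsys z h)
    (p := (x, t)) (q := (a, b)) hp hab
end
end

section
/- Assume the Thirring polynomial system holds on Ω. Then on Ω: f₀ = −2v and h₀ = 2v⁎; the function g_{n+1} := G(0,·,·) has vanishing x- and t-partial derivatives (hence is constant on connected Ω); f_n = −2 g_{n+1} u and h_n = 2 g_{n+1} u⁎; and the function g₁ + 2 v v⁎ has vanishing x- and t-partial derivatives (hence g₁ = −2 v v⁎ + c₁ for a constant c₁ on connected Ω). -/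
/-!
At each point of `Ω` the system is a family of polynomial identities in `z`, so coefficients may be
compared. The `z^{n+1}` coefficients of the equations for `F_x`, `H_x` give `f₀ = -2v`, `h₀ = 2v⁎`;
setting `z = 0` in those for `F_t`, `H_t` gives `f_n`, `h_n`, and setting `z = 0` in those for
`G_x`, `G_t` then shows that both partial derivatives of `G(0,·,·)` vanish (in `G_t` the two terms
cancel by the formulas for `f_n`, `h_n`).

For `g₁ + 2vv⁎`, since `f₀ = -2v` and `h₀ = 2v⁎` hold on the open set `Ω`, the derivatives of `v`
and `v⁎` are read off from those of `f₀` and `h₀`: in `x` from the `z^n` coefficients of the `F_x`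
and `H_x` equations, in `t` from the `z^{n+1}` coefficients of the `F_t` and `H_t` equations. The
result cancels against the `z^n` coefficients of `G_x` and `G_t`.

Finally, a function whose two partial derivatives exist and vanish is constant on small squares,
hence constant on a connected open set (`exists_const_of_partials`).
-/

noncomputable section

open Complex

open Polynomial in
/-- The polynomial `∑_{j ≤ m} a_{m-j} z^j`; coefficients are indexed in descending order of the
power of `z`, as in `ThirringData.F`. -/
def revPoly (m : ℕ) (a : ℕ → ℂ) : ℂ[X] :=
  ∑ j ∈ Finset.range (m + 1), C (a (m - j)) * X ^ j

lemma revPoly_eval (m : ℕ) (a : ℕ → ℂ) (z : ℂ) :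
    (revPoly m a).eval z = ∑ j ∈ Finset.range (m + 1), a (m - j) * z ^ j := by
  simp [revPoly, Polynomial.eval_finsetSum]

lemma revPoly_coeff (m : ℕ) (a : ℕ → ℂ) (k : ℕ) :
    (revPoly m a).coeff k = if k ≤ m then a (m - k) else 0 := by
  simp [revPoly, Polynomial.finsetSum_coeff, Polynomial.coeff_X_pow]

lemma hasDerivAt_revPoly (m : ℕ) (a : ℕ → ℝ → ℂ) (s : ℝ)
    (ha : ∀ j, DifferentiableAt ℝ (a j) s) (z : ℂ) :
    HasDerivAt (fun s' => ∑ j ∈ Finset.range (m + 1), a (m - j) s' * z ^ j)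
      ((revPoly m fun j => deriv (a j) s).eval z) s := by
  rw [revPoly_eval]
  exact HasDerivAt.fun_sum fun j _ => (ha (m - j)).hasDerivAt.mul_const _

lemma exists_const_of_partials {Ω : Set (ℝ × ℝ)} (hΩ : IsOpen Ω) (hc : IsConnected Ω)
    (q : ℝ → ℝ → ℂ)
    (hx : ∀ x t : ℝ, (x, t) ∈ Ω → HasDerivAt (fun x' => q x' t) 0 x)
    (ht : ∀ x t : ℝ, (x, t) ∈ Ω → HasDerivAt (fun t' => q x t') 0 t) :
    ∃ c : ℂ, ∀ x t : ℝ, (x, t) ∈ Ω → q x t = c := by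
  have hloc : ∀ p ∈ Ω, ∀ᶠ r in nhds p, q r.1 r.2 = q p.1 p.2 := by
    rintro ⟨x, t⟩ hp
    obtain ⟨ε, hε, hb⟩ := Metric.isOpen_iff.1 hΩ _ hp
    -- The sup metric makes this ball a square; move first horizontally, then vertically.
    filter_upwards [Metric.ball_mem_nhds (x, t) hε] with ⟨x', t'⟩ hr
    rw [← ball_prod_same] at hr hb
    obtain ⟨hx', ht'⟩ := hr
    have h1 := (convex_ball x ε).norm_image_sub_le_of_norm_deriv_le (𝕜 := ℝ) (C := 0)
      (f := fun s => q s t')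
      (fun s hs => (hx s t' (hb ⟨hs, ht'⟩)).differentiableAt)
      (fun s hs => by rw [(hx s t' (hb ⟨hs, ht'⟩)).deriv, norm_zero])
      (Metric.mem_ball_self hε) hx'
    have h2 := (convex_ball t ε).norm_image_sub_le_of_norm_deriv_le (𝕜 := ℝ) (C := 0)
      (f := fun s => q x s)
      (fun s hs => (ht x s (hb ⟨Metric.mem_ball_self hε, hs⟩)).differentiableAt)
      (fun s hs => by rw [(ht x s (hb ⟨Metric.mem_ball_self hε, hs⟩)).deriv, norm_zero])
      (Metric.mem_ball_self hε) ht'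
    rw [zero_mul, norm_le_zero_iff, sub_eq_zero] at h1 h2
    exact h1.trans h2
  obtain ⟨p₀, hp₀⟩ := hc.nonempty
  refine ⟨q p₀.1 p₀.2, fun x t hp => ?_⟩
  refine (hc.isPreconnected.induction₂ (fun a b => q b.1 b.2 = q a.1 a.2) (fun p hp => ?_)
    (fun _ _ _ _ _ _ h1 h2 => h2.trans h1) (fun _ _ _ _ h => h.symm) hp₀ hp)
  exact (hloc p hp).filter_mono nhdsWithin_le_nhds

namespace ThirringData

variable {n : ℕ} {Ω : Set (ℝ × ℝ)}

open Polynomial in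
/-- Comparison of coefficients in the three `x`-equations. For `n = 0` there is no `f₁` or `h₁` in
the `z^n` coefficient; writing these terms as coefficients of `X * F` and `X * H` treats all `n`
uniformly. -/
lemma System.x_coeffs {S : ThirringData n Ω} (hsys : S.System) {x t : ℝ} (hp : (x, t) ∈ Ω) :
    S.f 0 x t = -2 * S.v x t ∧ S.h 0 x t = 2 * S.vs x t ∧
    ∃ f₁ h₁ : ℂ,
      deriv (fun x' => S.f 0 x' t) x = -2 * I * S.v x t * S.vs x t * S.f 0 x t + 2 * I * f₁
        + 4 * I * S.v x t * S.gc 1 x t ∧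
      deriv (fun x' => S.h 0 x' t) x = 2 * I * S.v x t * S.vs x t * S.h 0 x t - 2 * I * h₁
        + 4 * I * S.vs x t * S.gc 1 x t ∧
      deriv (fun x' => S.gc 1 x' t) x = 2 * I * (S.vs x t * f₁ + S.v x t * h₁) := by
  obtain ⟨eF, eG, eH, -, -, -⟩ := hsys
  have pF : revPoly n (fun j => deriv (fun x' => S.f j x' t) x) =
      C (-2 * I * S.v x t * S.vs x t) * revPoly n (fun j => S.f j x t)
      + C (2 * I) * (X * revPoly n (fun j => S.f j x t))
      + C (4 * I * S.v x t) * revPoly (n + 1) (fun j => S.gc j x t) := by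
    refine Polynomial.funext fun z => ?_
    rw [← (hasDerivAt_revPoly n (fun j x' => S.f j x' t) x (fun j => S.f_diff_x j x t hp) z).deriv]
    refine (eF z x t hp).trans ?_
    simp only [eval_add, eval_mul, eval_C, eval_X, revPoly_eval, F, G]
    ring
  have pH : revPoly n (fun j => deriv (fun x' => S.h j x' t) x) =
      C (2 * I * S.v x t * S.vs x t) * revPoly n (fun j => S.h j x t)
      + C (-2 * I) * (X * revPoly n (fun j => S.h j x t))
      + C (4 * I * S.vs x t) * revPoly (n + 1) (fun j => S.gc j x t) := by
    refine Polynomial.funext fun z => ?_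
    rw [← (hasDerivAt_revPoly n (fun j x' => S.h j x' t) x (fun j => S.h_diff_x j x t hp) z).deriv]
    refine (eH z x t hp).trans ?_
    simp only [eval_add, eval_mul, eval_C, eval_X, revPoly_eval, Hp, G]
    ring
  have pG : revPoly (n + 1) (fun j => deriv (fun x' => S.gc j x' t) x) =
      C (2 * I * S.vs x t) * (X * revPoly n (fun j => S.f j x t))
      + C (2 * I * S.v x t) * (X * revPoly n (fun j => S.h j x t)) := by
    refine Polynomial.funext fun z => ?_
    rw [← (hasDerivAt_revPoly (n + 1) (fun j x' => S.gc j x' t) x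
      (fun j => S.gc_diff_x j x t hp) z).deriv]
    refine (eG z x t hp).trans ?_
    simp only [eval_add, eval_mul, eval_C, eval_X, revPoly_eval, F, Hp]
    ring
  have F1 := congrArg (fun p => p.coeff (n + 1)) pF
  have H1 := congrArg (fun p => p.coeff (n + 1)) pH
  have F0 := congrArg (fun p => p.coeff n) pF
  have H0 := congrArg (fun p => p.coeff n) pH
  have G0 := congrArg (fun p => p.coeff n) pG
  simp only [coeff_add, coeff_C_mul, coeff_X_mul, revPoly_coeff, S.hg0, le_refl,
    Nat.le_succ, Nat.not_succ_le_self, if_true, if_false, Nat.sub_self,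
    Nat.add_sub_cancel_left] at F1 H1 F0 H0 G0
  refine ⟨?_, ?_, (X * revPoly n fun j => S.f j x t).coeff n,
    (X * revPoly n fun j => S.h j x t).coeff n, F0, ?_, ?_⟩
  · apply mul_left_cancel₀ (mul_ne_zero two_ne_zero I_ne_zero)
    linear_combination -F1
  · apply mul_left_cancel₀ (mul_ne_zero two_ne_zero I_ne_zero)
    linear_combination H1
  · exact H0.trans (by ring)
  · exact G0.trans (by ring)

open Polynomial in
/-- Comparison of coefficients in the three `t`-equations: the lowest ones for `f_n`, `h_n`, the
ones governing `f₀`, `h₀` and `g₁` for the derivatives. -/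
lemma System.t_coeffs {S : ThirringData n Ω} (hsys : S.System) {x t : ℝ} (hp : (x, t) ∈ Ω) :
    S.f n x t = -2 * S.G 0 x t * S.u x t ∧ S.h n x t = 2 * S.G 0 x t * S.us x t ∧
    deriv (fun t' => S.f 0 x t') t = -2 * I * S.u x t * S.us x t * S.f 0 x t + 4 * I * S.u x t ∧
    deriv (fun t' => S.h 0 x t') t = 2 * I * S.u x t * S.us x t * S.h 0 x t + 4 * I * S.us x t ∧
    deriv (fun t' => S.gc 1 x t') t = 2 * I * (S.us x t * S.f 0 x t + S.u x t * S.h 0 x t) := by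
  obtain ⟨-, -, -, eF, eG, eH⟩ := hsys
  have pF : X * revPoly n (fun j => deriv (fun t' => S.f j x t') t) =
      C (-2 * I * S.u x t * S.us x t) * (X * revPoly n (fun j => S.f j x t))
      + C (2 * I) * revPoly n (fun j => S.f j x t)
      + C (4 * I * S.u x t) * revPoly (n + 1) (fun j => S.gc j x t) := by
    refine Polynomial.funext fun z => ?_
    rw [eval_mul, eval_X,
      ← (hasDerivAt_revPoly n (fun j t' => S.f j x t') t (fun j => S.f_diff_t j x t hp) z).deriv]
    refine (eF z x t hp).trans ?_
    simp only [eval_add, eval_mul, eval_C, eval_X, revPoly_eval, F, G]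
    ring
  have pH : X * revPoly n (fun j => deriv (fun t' => S.h j x t') t) =
      C (2 * I * S.u x t * S.us x t) * (X * revPoly n (fun j => S.h j x t))
      + C (-2 * I) * revPoly n (fun j => S.h j x t)
      + C (4 * I * S.us x t) * revPoly (n + 1) (fun j => S.gc j x t) := by
    refine Polynomial.funext fun z => ?_
    rw [eval_mul, eval_X,
      ← (hasDerivAt_revPoly n (fun j t' => S.h j x t') t (fun j => S.h_diff_t j x t hp) z).deriv]
    refine (eH z x t hp).trans ?_
    simp only [eval_add, eval_mul, eval_C, eval_X, revPoly_eval, Hp, G]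
    ring
  have pG : revPoly (n + 1) (fun j => deriv (fun t' => S.gc j x t') t) =
      C (2 * I * S.us x t) * revPoly n (fun j => S.f j x t)
      + C (2 * I * S.u x t) * revPoly n (fun j => S.h j x t) := by
    refine Polynomial.funext fun z => ?_
    rw [← (hasDerivAt_revPoly (n + 1) (fun j t' => S.gc j x t') t
      (fun j => S.gc_diff_t j x t hp) z).deriv]
    refine (eG z x t hp).trans ?_
    simp only [eval_add, eval_mul, eval_C, revPoly_eval, F, Hp]
    ring
  have F1 := congrArg (fun p => p.coeff (n + 1)) pF
  have H1 := congrArg (fun p => p.coeff (n + 1)) pH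
  have F0 := congrArg (fun p => p.coeff 0) pF
  have H0 := congrArg (fun p => p.coeff 0) pH
  have G0 := congrArg (fun p => p.coeff n) pG
  have hG : S.G 0 x t = S.gc (n + 1) x t := by
    have h := revPoly_coeff (n + 1) (fun j => S.gc j x t) 0
    rw [coeff_zero_eq_eval_zero, revPoly_eval] at h
    exact h
  simp only [coeff_add, coeff_C_mul, coeff_X_mul, coeff_X_mul_zero, revPoly_coeff, S.hg0, le_refl,
    Nat.le_succ, Nat.not_succ_le_self, if_true, if_false, Nat.sub_self, Nat.zero_le, Nat.sub_zero,
    Nat.add_sub_cancel_left] at F1 H1 F0 H0 G0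
  rw [hG]
  refine ⟨?_, ?_, ?_, ?_, ?_⟩
  · apply mul_left_cancel₀ (mul_ne_zero two_ne_zero I_ne_zero)
    linear_combination -F0
  · apply mul_left_cancel₀ (mul_ne_zero two_ne_zero I_ne_zero)
    linear_combination H0
  · exact F1.trans (by ring)
  · exact H1.trans (by ring)
  · exact G0.trans (by ring)

end ThirringData

/-- coefficient identities following from the Thirring polynomial
system: `f₀ = -2v`, `h₀ = 2v⁎`, `g_{n+1} = G(0,·,·)` has vanishing partial
derivatives (hence is constant on connected `Ω`), `f_n = -2 g_{n+1} u`,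
`h_n = 2 g_{n+1} u⁎`, and `g₁ + 2 v v⁎` has vanishing partial derivatives
(hence `g₁ = -2 v v⁎ + c₁` for a constant `c₁` on connected `Ω`). -/
theorem statement2 {n : ℕ} {Ω : Set (ℝ × ℝ)} (hΩ : IsOpen Ω)
    (S : ThirringData n Ω)
    (hu_x : ∀ x t : ℝ, (x, t) ∈ Ω → DifferentiableAt ℝ (fun x' => S.u x' t) x)
    (hu_t : ∀ x t : ℝ, (x, t) ∈ Ω → DifferentiableAt ℝ (fun t' => S.u x t') t)
    (hv_x : ∀ x t : ℝ, (x, t) ∈ Ω → DifferentiableAt ℝ (fun x' => S.v x' t) x)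
    (hv_t : ∀ x t : ℝ, (x, t) ∈ Ω → DifferentiableAt ℝ (fun t' => S.v x t') t)
    (hus_x : ∀ x t : ℝ, (x, t) ∈ Ω → DifferentiableAt ℝ (fun x' => S.us x' t) x)
    (hus_t : ∀ x t : ℝ, (x, t) ∈ Ω → DifferentiableAt ℝ (fun t' => S.us x t') t)
    (hvs_x : ∀ x t : ℝ, (x, t) ∈ Ω → DifferentiableAt ℝ (fun x' => S.vs x' t) x)
    (hvs_t : ∀ x t : ℝ, (x, t) ∈ Ω → DifferentiableAt ℝ (fun t' => S.vs x t') t)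
    (hsys : S.System) :
    (∀ x t : ℝ, (x, t) ∈ Ω → S.f 0 x t = -2 * S.v x t) ∧
    (∀ x t : ℝ, (x, t) ∈ Ω → S.h 0 x t = 2 * S.vs x t) ∧
    (∀ x t : ℝ, (x, t) ∈ Ω → pdx (S.G 0) x t = 0 ∧ pdt (S.G 0) x t = 0) ∧
    (IsConnected Ω → ∃ c : ℂ, ∀ x t : ℝ, (x, t) ∈ Ω → S.G 0 x t = c) ∧
    (∀ x t : ℝ, (x, t) ∈ Ω → S.f n x t = -2 * S.G 0 x t * S.u x t) ∧
    (∀ x t : ℝ, (x, t) ∈ Ω → S.h n x t = 2 * S.G 0 x t * S.us x t) ∧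
    (∀ x t : ℝ, (x, t) ∈ Ω →
      pdx (fun x' t' => S.gc 1 x' t' + 2 * S.v x' t' * S.vs x' t') x t = 0 ∧
      pdt (fun x' t' => S.gc 1 x' t' + 2 * S.v x' t' * S.vs x' t') x t = 0) ∧
    (IsConnected Ω → ∃ c₁ : ℂ, ∀ x t : ℝ, (x, t) ∈ Ω →
      S.gc 1 x t = -2 * S.v x t * S.vs x t + c₁) := by
  have hnx : ∀ x t : ℝ, (x, t) ∈ Ω → ∀ᶠ x' in nhds x, (x', t) ∈ Ω := fun x t hp =>
    (Continuous.prodMk_left t).continuousAt.eventually (hΩ.mem_nhds hp)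
  have hnt : ∀ x t : ℝ, (x, t) ∈ Ω → ∀ᶠ t' in nhds t, (x, t') ∈ Ω := fun x t hp =>
    (Continuous.prodMk_right x).continuousAt.eventually (hΩ.mem_nhds hp)
  have hGx : ∀ x t : ℝ, (x, t) ∈ Ω → HasDerivAt (fun x' => S.G 0 x' t) 0 x := by
    intro x t hp
    have hd : HasDerivAt (fun x' => S.G 0 x' t) (pdx (S.G 0) x t) x :=
      (hasDerivAt_revPoly (n + 1) (fun j x' => S.gc j x' t) x
      (fun j => S.gc_diff_x j x t hp) 0).differentiableAt.hasDerivAt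
    have e := hsys.2.1 0 x t hp
    rw [mul_zero, zero_mul] at e
    rwa [e] at hd
  have hGt : ∀ x t : ℝ, (x, t) ∈ Ω → HasDerivAt (fun t' => S.G 0 x t') 0 t := by
    intro x t hp
    have hd : HasDerivAt (fun t' => S.G 0 x t') (pdt (S.G 0) x t) t :=
      (hasDerivAt_revPoly (n + 1) (fun j t' => S.gc j x t') t
      (fun j => S.gc_diff_t j x t hp) 0).differentiableAt.hasDerivAt
    have e := hsys.2.2.2.2.1 0 x t hp
    obtain ⟨hf, hh, -⟩ := hsys.t_coeffs hp
    have hF : S.F 0 x t = S.f n x t := by simp [ThirringData.F, Finset.sum_range_succ']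
    have hH : S.Hp 0 x t = S.h n x t := by simp [ThirringData.Hp, Finset.sum_range_succ']
    have e0 : pdt (S.G 0) x t = 0 := by
      rw [e, hF, hH, hf, hh]
      ring
    rwa [e0] at hd
  have hgx : ∀ x t : ℝ, (x, t) ∈ Ω →
      HasDerivAt (fun x' => S.gc 1 x' t + 2 * S.v x' t * S.vs x' t) 0 x := by
    intro x t hp
    obtain ⟨hf, hh, f₁, h₁, ef, eh, eg⟩ := hsys.x_coeffs hp
    have dv := (hv_x x t hp).hasDerivAt
    have dvs := (hvs_x x t hp).hasDerivAt
    have ev : deriv (fun x' => S.f 0 x' t) x = -2 * deriv (fun x' => S.v x' t) x :=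
      ((dv.const_mul (-2)).congr_of_eventuallyEq
        ((hnx x t hp).mono fun x' hx' => (hsys.x_coeffs hx').1)).deriv
    have evs : deriv (fun x' => S.h 0 x' t) x = 2 * deriv (fun x' => S.vs x' t) x :=
      ((dvs.const_mul 2).congr_of_eventuallyEq
        ((hnx x t hp).mono fun x' hx' => (hsys.x_coeffs hx').2.1)).deriv
    refine ((S.gc_diff_x 1 x t hp).hasDerivAt.fun_add ((dv.const_mul 2).fun_mul dvs)).congr_deriv ?_
    rw [ev, hf] at ef
    rw [evs, hh] at eh
    linear_combination eg - S.vs x t * ef + S.v x t * eh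
  have hgt : ∀ x t : ℝ, (x, t) ∈ Ω →
      HasDerivAt (fun t' => S.gc 1 x t' + 2 * S.v x t' * S.vs x t') 0 t := by
    intro x t hp
    obtain ⟨hf, hh, -⟩ := hsys.x_coeffs hp
    obtain ⟨-, -, ef, eh, eg⟩ := hsys.t_coeffs hp
    have dv := (hv_t x t hp).hasDerivAt
    have dvs := (hvs_t x t hp).hasDerivAt
    have ev : deriv (fun t' => S.f 0 x t') t = -2 * deriv (fun t' => S.v x t') t :=
      ((dv.const_mul (-2)).congr_of_eventuallyEq
        ((hnt x t hp).mono fun t' ht' => (hsys.x_coeffs ht').1)).deriv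
    have evs : deriv (fun t' => S.h 0 x t') t = 2 * deriv (fun t' => S.vs x t') t :=
      ((dvs.const_mul 2).congr_of_eventuallyEq
        ((hnt x t hp).mono fun t' ht' => (hsys.x_coeffs ht').2.1)).deriv
    refine ((S.gc_diff_t 1 x t hp).hasDerivAt.fun_add ((dv.const_mul 2).fun_mul dvs)).congr_deriv ?_
    rw [ev, hf] at ef
    rw [evs, hh] at eh
    rw [hf, hh] at eg
    linear_combination eg - S.vs x t * ef + S.v x t * eh
  refine ⟨fun x t hp => (hsys.x_coeffs hp).1, fun x t hp => (hsys.x_coeffs hp).2.1,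
    fun x t hp => ⟨(hGx x t hp).deriv, (hGt x t hp).deriv⟩,
    fun hc => exists_const_of_partials hΩ hc _ hGx hGt,
    fun x t hp => (hsys.t_coeffs hp).1, fun x t hp => (hsys.t_coeffs hp).2.1,
    fun x t hp => ⟨(hgx x t hp).deriv, (hgt x t hp).deriv⟩, fun hc => ?_⟩
  obtain ⟨c, h⟩ := exists_const_of_partials hΩ hc
    (fun x t => S.gc 1 x t + 2 * S.v x t * S.vs x t) hgx hgt
  exact ⟨c, fun x t hp => by linear_combination h x t hp⟩
end
end

section
/- Assume the Thirring polynomial system holds on Ω, that u, v, u⁎, v⁎ : Ω → ℂ are differentiable, and that G(0,x,t) ≠ 0 for all (x,t) ∈ Ω. Then u, v, u⁎, v⁎ satisfy the classical massive Thirring system on Ω: −i u_x + 2v + 2 v v⁎ u = 0, i u⁎_x + 2v⁎ + 2 v v⁎ u⁎ = 0, −i v_t + 2u + 2 u u⁎ v = 0, and i v⁎_t + 2u⁎ + 2 u u⁎ v⁎ = 0. -/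
/-!
The equations for `u` and `u⁎` come from the coefficient of lowest degree in `z`, those for `v` and
`v⁎` from the coefficient of highest degree; mixed partial derivatives never enter.

* At `z = 0` the `t`-equations for `F` and `H` degenerate to the algebraic relations
  `F(0) = -2 u G(0)` and `H(0) = 2 u⁎ G(0)`, while the `x`-equation for `G` says `G(0)_x = 0`.
  Differentiating the relations in `x`, inserting the `x`-equations at `z = 0`, and cancelling
  `G(0) ≠ 0` gives the equations for `u_x` and `u⁎_x`.
* The coefficient of `z ^ (n + 1)` in the `x`-equations for `F` and `H` gives `f₀ = -2 v` and
  `h₀ = 2 v⁎`, because `g₀ = 1`. The same coefficient in the `t`-equations expresses `(f₀)_t` and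
  `(h₀)_t`, which gives the equations for `v_t` and `v⁎_t`. The coefficient is extracted by
  `leading_coeff_identity`.
-/

noncomputable section

open Complex

open Polynomial in
/-- Comparison of the coefficients of `z ^ (n + 1)` in a polynomial identity of the shape shared by
the `F`- and `H`-equations of the Thirring polynomial system: `δ = 0` covers the `x`-equations and
`δ = 1` the `t`-equations. -/
lemma leading_coeff_identity (n : ℕ) (a b g : ℕ → ℂ) (ε δ α β γ : ℂ)
    (h : ∀ z : ℂ, (ε + δ * z) * ∑ j ∈ Finset.range (n + 1), b (n - j) * z ^ j =
      (α + β * z) * ∑ j ∈ Finset.range (n + 1), a (n - j) * z ^ j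
        + γ * ∑ j ∈ Finset.range (n + 2), g (n + 1 - j) * z ^ j) :
    δ * b 0 = β * a 0 + γ * g 0 := by
  have hp : (C ε + C δ * X) * ∑ j ∈ Finset.range (n + 1), C (b (n - j)) * X ^ j =
      (C α + C β * X) * ∑ j ∈ Finset.range (n + 1), C (a (n - j)) * X ^ j
        + C γ * ∑ j ∈ Finset.range (n + 2), C (g (n + 1 - j)) * X ^ j := by
    apply Polynomial.funext
    intro z
    simpa [eval_finsetSum] using h z
  have hc := congrArg (fun p => coeff p (n + 1)) hp
  simpa [add_mul, mul_assoc, coeff_C_mul, coeff_X_mul, finsetSum_coeff, coeff_X_pow] using hc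

/-- Term-by-term differentiation of a polynomial in `z` with parameter-dependent coefficients. -/
lemma deriv_sum_mul_pow (n m : ℕ) (c : ℕ → ℝ → ℂ) (s : ℝ)
    (hc : ∀ j, DifferentiableAt ℝ (c j) s) (z : ℂ) :
    deriv (fun s' => ∑ j ∈ Finset.range m, c (n - j) s' * z ^ j) s =
      ∑ j ∈ Finset.range m, deriv (c (n - j)) s * z ^ j :=
  (HasDerivAt.fun_sum fun j _ => ((hc (n - j)).hasDerivAt.mul_const (z ^ j))).deriv

namespace ThirringData

variable {n : ℕ} {Ω : Set (ℝ × ℝ)}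

lemma F_zero (S : ThirringData n Ω) (x t : ℝ) : S.F 0 x t = S.f n x t := by
  simp [F, Finset.sum_range_succ']

lemma Hp_zero (S : ThirringData n Ω) (x t : ℝ) : S.Hp 0 x t = S.h n x t := by
  simp [Hp, Finset.sum_range_succ']

lemma G_zero (S : ThirringData n Ω) (x t : ℝ) : S.G 0 x t = S.gc (n + 1) x t := by
  simp [G, Finset.sum_range_succ']

lemma f_zero_eq (S : ThirringData n Ω) (hsys : S.System) {x t : ℝ} (hxt : (x, t) ∈ Ω) :
    S.f 0 x t = -2 * S.v x t := by
  have key := leading_coeff_identity n (fun j => S.f j x t)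
    (fun j => deriv (fun x' => S.f j x' t) x) (fun j => S.gc j x t) 1 0
    (-2 * I * (S.v x t * S.vs x t)) (2 * I) (4 * I * S.v x t) (fun z => by
      have e := hsys.1 z x t hxt
      rw [show pdx (S.F z) x t = _ from deriv_sum_mul_pow n (n + 1) (fun j x' => S.f j x' t) x
        (fun j => S.f_diff_x j x t hxt) z] at e
      simp only [F, G] at e
      linear_combination e)
  simp only [S.hg0] at key
  linear_combination (I / 2) * key + (S.f 0 x t + 2 * S.v x t) * I_sq

lemma h_zero_eq (S : ThirringData n Ω) (hsys : S.System) {x t : ℝ} (hxt : (x, t) ∈ Ω) :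
    S.h 0 x t = 2 * S.vs x t := by
  have key := leading_coeff_identity n (fun j => S.h j x t)
    (fun j => deriv (fun x' => S.h j x' t) x) (fun j => S.gc j x t) 1 0
    (2 * I * (S.v x t * S.vs x t)) (-2 * I) (4 * I * S.vs x t) (fun z => by
      have e := hsys.2.2.1 z x t hxt
      rw [show pdx (S.Hp z) x t = _ from deriv_sum_mul_pow n (n + 1) (fun j x' => S.h j x' t) x
        (fun j => S.h_diff_x j x t hxt) z] at e
      simp only [Hp, G] at e
      linear_combination e)
  simp only [S.hg0] at key
  linear_combination (-I / 2) * key + (S.h 0 x t - 2 * S.vs x t) * I_sq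

lemma pdt_f_zero (S : ThirringData n Ω) (hsys : S.System) {x t : ℝ} (hxt : (x, t) ∈ Ω) :
    pdt (S.f 0) x t = -2 * I * (S.u x t * S.us x t) * S.f 0 x t + 4 * I * S.u x t := by
  have key := leading_coeff_identity n (fun j => S.f j x t)
    (fun j => deriv (fun t' => S.f j x t') t) (fun j => S.gc j x t) 0 1
    (2 * I) (-2 * I * (S.u x t * S.us x t)) (4 * I * S.u x t) (fun z => by
      have e := hsys.2.2.2.1 z x t hxt
      rw [show pdt (S.F z) x t = _ from deriv_sum_mul_pow n (n + 1) (fun j t' => S.f j x t') t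
        (fun j => S.f_diff_t j x t hxt) z] at e
      simp only [F, G] at e
      linear_combination e)
  simp only [S.hg0] at key
  unfold pdt
  linear_combination key

lemma pdt_h_zero (S : ThirringData n Ω) (hsys : S.System) {x t : ℝ} (hxt : (x, t) ∈ Ω) :
    pdt (S.h 0) x t = 2 * I * (S.u x t * S.us x t) * S.h 0 x t + 4 * I * S.us x t := by
  have key := leading_coeff_identity n (fun j => S.h j x t)
    (fun j => deriv (fun t' => S.h j x t') t) (fun j => S.gc j x t) 0 1
    (-2 * I) (2 * I * (S.u x t * S.us x t)) (4 * I * S.us x t) (fun z => by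
      have e := hsys.2.2.2.2.2 z x t hxt
      rw [show pdt (S.Hp z) x t = _ from deriv_sum_mul_pow n (n + 1) (fun j t' => S.h j x t') t
        (fun j => S.h_diff_t j x t hxt) z] at e
      simp only [Hp, G] at e
      linear_combination e)
  simp only [S.hg0] at key
  unfold pdt
  linear_combination key

lemma F_zero_eq (S : ThirringData n Ω) (hsys : S.System) {x t : ℝ} (hxt : (x, t) ∈ Ω) :
    S.F 0 x t = -2 * S.u x t * S.G 0 x t := by
  have e := hsys.2.2.2.1 0 x t hxt
  linear_combination (I / 2) * e + (S.F 0 x t + 2 * S.u x t * S.G 0 x t) * I_sq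

lemma Hp_zero_eq (S : ThirringData n Ω) (hsys : S.System) {x t : ℝ} (hxt : (x, t) ∈ Ω) :
    S.Hp 0 x t = 2 * S.us x t * S.G 0 x t := by
  have e := hsys.2.2.2.2.2 0 x t hxt
  linear_combination (-I / 2) * e + (S.Hp 0 x t - 2 * S.us x t * S.G 0 x t) * I_sq

end ThirringData

/-- if the Thirring polynomial system holds on `Ω`, the functions
`u, v, u⁎, v⁎` are differentiable, and `G(0,x,t) ≠ 0` on `Ω`, then
`u, v, u⁎, v⁎` satisfy the classical massive Thirring system on `Ω`. -/
theorem statement3 {n : ℕ} {Ω : Set (ℝ × ℝ)} (hΩ : IsOpen Ω)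
    (S : ThirringData n Ω)
    (hu_x : ∀ x t : ℝ, (x, t) ∈ Ω → DifferentiableAt ℝ (fun x' => S.u x' t) x)
    (hu_t : ∀ x t : ℝ, (x, t) ∈ Ω → DifferentiableAt ℝ (fun t' => S.u x t') t)
    (hv_x : ∀ x t : ℝ, (x, t) ∈ Ω → DifferentiableAt ℝ (fun x' => S.v x' t) x)
    (hv_t : ∀ x t : ℝ, (x, t) ∈ Ω → DifferentiableAt ℝ (fun t' => S.v x t') t)
    (hus_x : ∀ x t : ℝ, (x, t) ∈ Ω → DifferentiableAt ℝ (fun x' => S.us x' t) x)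
    (hus_t : ∀ x t : ℝ, (x, t) ∈ Ω → DifferentiableAt ℝ (fun t' => S.us x t') t)
    (hvs_x : ∀ x t : ℝ, (x, t) ∈ Ω → DifferentiableAt ℝ (fun x' => S.vs x' t) x)
    (hvs_t : ∀ x t : ℝ, (x, t) ∈ Ω → DifferentiableAt ℝ (fun t' => S.vs x t') t)
    (hsys : S.System)
    (hGne : ∀ x t : ℝ, (x, t) ∈ Ω → S.G 0 x t ≠ 0) :
    ∀ x t : ℝ, (x, t) ∈ Ω →
      (-I * pdx S.u x t + 2 * S.v x t + 2 * S.v x t * S.vs x t * S.u x t = 0) ∧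
      (I * pdx S.us x t + 2 * S.vs x t + 2 * S.v x t * S.vs x t * S.us x t = 0) ∧
      (-I * pdt S.v x t + 2 * S.u x t + 2 * S.u x t * S.us x t * S.v x t = 0) ∧
      (I * pdt S.vs x t + 2 * S.us x t + 2 * S.u x t * S.us x t * S.vs x t = 0) := by
  intro x t hxt
  have hnx : ∀ᶠ x' in nhds x, (x', t) ∈ Ω :=
    (hΩ.preimage (by fun_prop : Continuous fun x' : ℝ => (x', t))).mem_nhds hxt
  have hnt : ∀ᶠ t' in nhds t, (x, t') ∈ Ω :=
    (hΩ.preimage (by fun_prop : Continuous fun t' : ℝ => (x, t'))).mem_nhds hxt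
  have hG0 := hGne x t hxt
  have hG : HasDerivAt (fun x' => S.G 0 x' t) 0 x := by
    have hd : DifferentiableAt ℝ (fun x' => S.G 0 x' t) x := by
      simpa only [S.G_zero] using S.gc_diff_x (n + 1) x t hxt
    have h0 : deriv (fun x' => S.G 0 x' t) x = 0 := by
      simpa [pdx] using hsys.2.1 0 x t hxt
    simpa only [h0] using hd.hasDerivAt
  have hF : pdx (S.F 0) x t = -2 * pdx S.u x t * S.G 0 x t := by
    have hd := (((hu_x x t hxt).hasDerivAt.const_mul (-2 : ℂ)).fun_mul hG).congr_of_eventuallyEq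
      (hnx.mono fun x' hx' => S.F_zero_eq hsys hx')
    simpa [pdx] using hd.deriv
  have hH : pdx (S.Hp 0) x t = 2 * pdx S.us x t * S.G 0 x t := by
    have hd := (((hus_x x t hxt).hasDerivAt.const_mul (2 : ℂ)).fun_mul hG).congr_of_eventuallyEq
      (hnx.mono fun x' hx' => S.Hp_zero_eq hsys hx')
    simpa [pdx] using hd.deriv
  have hf : pdt (S.f 0) x t = -2 * pdt S.v x t :=
    (((hv_t x t hxt).hasDerivAt.const_mul (-2 : ℂ)).congr_of_eventuallyEq
      (hnt.mono fun t' ht' => S.f_zero_eq hsys ht')).deriv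
  have hh : pdt (S.h 0) x t = 2 * pdt S.vs x t :=
    (((hvs_t x t hxt).hasDerivAt.const_mul (2 : ℂ)).congr_of_eventuallyEq
      (hnt.mono fun t' ht' => S.h_zero_eq hsys ht')).deriv
  have eF := hsys.1 0 x t hxt
  have eH := hsys.2.2.1 0 x t hxt
  have ef := S.pdt_f_zero hsys hxt
  have eh := S.pdt_h_zero hsys hxt
  rw [hF, S.F_zero_eq hsys hxt] at eF
  rw [hH, S.Hp_zero_eq hsys hxt] at eH
  rw [hf, S.f_zero_eq hsys hxt] at ef
  rw [hh, S.h_zero_eq hsys hxt] at eh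
  refine ⟨mul_right_cancel₀ hG0 ?_, mul_right_cancel₀ hG0 ?_, ?_, ?_⟩
  · linear_combination (I / 2) * eF +
      2 * (S.v x t * S.vs x t * S.u x t + S.v x t) * S.G 0 x t * I_sq
  · linear_combination (I / 2) * eH +
      2 * (S.v x t * S.vs x t * S.us x t + S.vs x t) * S.G 0 x t * I_sq
  · linear_combination (I / 2) * ef +
      2 * (S.u x t * S.us x t * S.v x t + S.u x t) * I_sq
  · linear_combination (I / 2) * eh +
      2 * (S.u x t * S.us x t * S.vs x t + S.us x t) * I_sq
end
end

section
/- Suppose the differentiable functions u, v, u⁎, v⁎ : Ω → ℂ satisfy the classical massive Thirring system on Ω. For ζ ∈ ℂ\{0} and z = ζ² define U(ζ,x,t) = i[[z − v v⁎, 2ζ v],[2ζ v⁎, −z + v v⁎]] and W(ζ,x,t) = i[[z⁻¹ − u u⁎, 2ζ⁻¹ u],[2ζ⁻¹ u⁎, −z⁻¹ + u u⁎]]. Then the commutator relation U_t(ζ,x,t) − W_x(ζ,x,t) + [U(ζ,x,t), W(ζ,x,t)] = 0 holds for all ζ ∈ ℂ\{0} and (x,t) ∈ Ω. -/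
/-!
The zero-curvature identity is checked entry by entry. The product rule expresses `U_t` and `W_x`
through `v_t`, `v⁎_t`, `u_x`, `u⁎_x` (`UmatT_eq`, `WmatX_eq`), and the Thirring system makes these
derivatives polynomials in `u, v, u⁎, v⁎`. Differentiability matters only for the diagonal, where
the quartic terms coming from the product rule cancel; what remains is a polynomial identity in
`u, v, u⁎, v⁎, ζ, ζ⁻¹` modulo `i² = -1` and `ζ ζ⁻¹ = 1`.
-/

noncomputable section

open Complex

/-- The matrix `U(ζ,x,t)`, with `z = ζ²`. -/
def Umat (v vs : ℝ → ℝ → ℂ) (ζ : ℂ) (x t : ℝ) : Matrix (Fin 2) (Fin 2) ℂ :=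
  I • !![ζ ^ 2 - v x t * vs x t, 2 * ζ * v x t;
         2 * ζ * vs x t, -ζ ^ 2 + v x t * vs x t]

/-- The matrix `W(ζ,x,t)` (denoted `Ṽ` in the paper), with `z = ζ²`. -/
def Wmat (u us : ℝ → ℝ → ℂ) (ζ : ℂ) (x t : ℝ) : Matrix (Fin 2) (Fin 2) ℂ :=
  I • !![(ζ ^ 2)⁻¹ - u x t * us x t, 2 * ζ⁻¹ * u x t;
         2 * ζ⁻¹ * us x t, -(ζ ^ 2)⁻¹ + u x t * us x t]

/-- Entrywise partial `t`-derivative of `U(ζ,·,·)`. -/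
def UmatT (v vs : ℝ → ℝ → ℂ) (ζ : ℂ) (x t : ℝ) : Matrix (Fin 2) (Fin 2) ℂ :=
  Matrix.of fun i j => deriv (fun t' => Umat v vs ζ x t' i j) t

/-- Entrywise partial `x`-derivative of `W(ζ,·,·)`. -/
def WmatX (u us : ℝ → ℝ → ℂ) (ζ : ℂ) (x t : ℝ) : Matrix (Fin 2) (Fin 2) ℂ :=
  Matrix.of fun i j => deriv (fun x' => Wmat u us ζ x' t i j) x

theorem UmatT_eq {v vs : ℝ → ℝ → ℂ} {ζ : ℂ} {x t : ℝ}
    (hv : DifferentiableAt ℝ (fun t' => v x t') t)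
    (hvs : DifferentiableAt ℝ (fun t' => vs x t') t) :
    UmatT v vs ζ x t =
      I • !![-(pdt v x t * vs x t + v x t * pdt vs x t), 2 * ζ * pdt v x t;
             2 * ζ * pdt vs x t, pdt v x t * vs x t + v x t * pdt vs x t] := by
  have h := deriv_fun_mul hv hvs
  ext i j
  fin_cases i <;> fin_cases j <;> simp [UmatT, Umat, pdt, h]

theorem WmatX_eq {u us : ℝ → ℝ → ℂ} {ζ : ℂ} {x t : ℝ}
    (hu : DifferentiableAt ℝ (fun x' => u x' t) x)
    (hus : DifferentiableAt ℝ (fun x' => us x' t) x) :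
    WmatX u us ζ x t =
      I • !![-(pdx u x t * us x t + u x t * pdx us x t), 2 * ζ⁻¹ * pdx u x t;
             2 * ζ⁻¹ * pdx us x t, pdx u x t * us x t + u x t * pdx us x t] := by
  -- `W(ζ)` has the same shape as `U(ζ⁻¹)`, with the roles of the two variables exchanged.
  have h := UmatT_eq (v := fun a b => u b a) (vs := fun a b => us b a) (ζ := ζ⁻¹) hu hus
  simpa only [UmatT, Umat, WmatX, Wmat, pdt, pdx, inv_pow] using h

/-- if `u, v, u⁎, v⁎` are differentiable and satisfy the classical
massive Thirring system on `Ω`, then `U_t - W_x + [U, W] = 0` for all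
`ζ ∈ ℂ \ {0}` and `(x,t) ∈ Ω`. -/
theorem statement4 (Ω : Set (ℝ × ℝ)) (hΩ : IsOpen Ω) (u v us vs : ℝ → ℝ → ℂ)
    (hu_x : ∀ x t : ℝ, (x, t) ∈ Ω → DifferentiableAt ℝ (fun x' => u x' t) x)
    (hu_t : ∀ x t : ℝ, (x, t) ∈ Ω → DifferentiableAt ℝ (fun t' => u x t') t)
    (hv_x : ∀ x t : ℝ, (x, t) ∈ Ω → DifferentiableAt ℝ (fun x' => v x' t) x)
    (hv_t : ∀ x t : ℝ, (x, t) ∈ Ω → DifferentiableAt ℝ (fun t' => v x t') t)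
    (hus_x : ∀ x t : ℝ, (x, t) ∈ Ω → DifferentiableAt ℝ (fun x' => us x' t) x)
    (hus_t : ∀ x t : ℝ, (x, t) ∈ Ω → DifferentiableAt ℝ (fun t' => us x t') t)
    (hvs_x : ∀ x t : ℝ, (x, t) ∈ Ω → DifferentiableAt ℝ (fun x' => vs x' t) x)
    (hvs_t : ∀ x t : ℝ, (x, t) ∈ Ω → DifferentiableAt ℝ (fun t' => vs x t') t)
    (heq1 : ∀ x t : ℝ, (x, t) ∈ Ω →
      -I * pdx u x t + 2 * v x t + 2 * v x t * vs x t * u x t = 0)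
    (heq2 : ∀ x t : ℝ, (x, t) ∈ Ω →
      I * pdx us x t + 2 * vs x t + 2 * v x t * vs x t * us x t = 0)
    (heq3 : ∀ x t : ℝ, (x, t) ∈ Ω →
      -I * pdt v x t + 2 * u x t + 2 * u x t * us x t * v x t = 0)
    (heq4 : ∀ x t : ℝ, (x, t) ∈ Ω →
      I * pdt vs x t + 2 * us x t + 2 * u x t * us x t * vs x t = 0) :
    ∀ ζ : ℂ, ζ ≠ 0 → ∀ x t : ℝ, (x, t) ∈ Ω →
      UmatT v vs ζ x t - WmatX u us ζ x t +
        (Umat v vs ζ x t * Wmat u us ζ x t - Wmat u us ζ x t * Umat v vs ζ x t) = 0 := by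
  intro ζ hζ x t h
  have e1 : pdx u x t = -I * (2 * v x t + 2 * v x t * vs x t * u x t) := by
    linear_combination I * heq1 x t h + pdx u x t * I_sq
  have e2 : pdx us x t = I * (2 * vs x t + 2 * v x t * vs x t * us x t) := by
    linear_combination -I * heq2 x t h + pdx us x t * I_sq
  have e3 : pdt v x t = -I * (2 * u x t + 2 * u x t * us x t * v x t) := by
    linear_combination I * heq3 x t h + pdt v x t * I_sq
  have e4 : pdt vs x t = I * (2 * us x t + 2 * u x t * us x t * vs x t) := by
    linear_combination -I * heq4 x t h + pdt vs x t * I_sq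
  rw [UmatT_eq (hv_t x t h) (hvs_t x t h), WmatX_eq (hu_x x t h) (hus_x x t h), e1, e2, e3, e4]
  ext i j
  fin_cases i <;> fin_cases j <;>
    simp [Umat, Wmat] <;> field_simp <;> ring_nf
end
end

section
/- Assume the Thirring polynomial system holds on Ω. Fix z ∈ ℂ\{0} and y ∈ ℂ such that y² = G(z,x,t)² − z F(z,x,t) H(z,x,t) for all (x,t) ∈ Ω, and suppose F(z,x,t) ≠ 0 on Ω. Define φ(x,t) = (y + G(z,x,t))/F(z,x,t). Then φ satisfies the Riccati-type equations φ_x + 2i v φ² + 2i(z − v v⁎)φ = 2i z v⁎ and φ_t + 2i z⁻¹ u φ² + 2i(z⁻¹ − u u⁎)φ = 2i u⁎ on Ω. Moreover, with φ₊ = (y + G)/F and φ₋ = (−y + G)/F one has φ₊ φ₋ = z H/F, φ₊ + φ₋ = 2G/F, and φ₊ − φ₋ = 2y/F. -/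
/-!
Writing `φ = (y + G)/F` with `y` constant, the quotient rule gives `φ' = (G' F - (y + G) F')/F²`.
Substituting the system for `F'` and `G'`, everything in the Riccati equation cancels except a
multiple of `φ² - 2 G φ / F + z H / F = (y² - G² + z F H)/F²`, which vanishes on the spectral curve
`y² = G² - z F H`. The `x`- and `t`-equations are the same computation, `deriv_div_riccati`, with
`a = i v, b = i (v v⁎ - z), c = i z v⁎` and `a = i z⁻¹ u, b = i (u u⁎ - z⁻¹), c = i u⁎`. The curve
equation also gives `φ₊ φ₋ = z H / F`; the sum and the difference are plain algebra.
-/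

noncomputable section

open Complex

/-- The Riccati equation for `(y + g)/f` along one real variable: if `f' = -2 b f + 4 a g` and
`g' = 2 (c f + a k)`, where `k` satisfies `y² = g² - f k` at the point, then `φ = (y + g)/f` solves
`φ' + 2 a φ² - 2 b φ = 2 c`. -/
lemma deriv_div_riccati {f g : ℝ → ℂ} {s : ℝ} {y k a b c : ℂ}
    (hf : DifferentiableAt ℝ f s) (hg : DifferentiableAt ℝ g s) (hne : f s ≠ 0)
    (hf' : deriv f s = -2 * b * f s + 4 * a * g s)
    (hg' : deriv g s = 2 * (c * f s + a * k))
    (hy : y ^ 2 = g s ^ 2 - f s * k) :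
    deriv (fun r => (y + g r) / f r) s + 2 * a * ((y + g s) / f s) ^ 2
      - 2 * b * ((y + g s) / f s) = 2 * c := by
  have h := ((hg.hasDerivAt.const_add y).fun_div hf.hasDerivAt hne).deriv
  rw [h, hf', hg']
  field_simp
  linear_combination 2 * a * hy

/-- given the Thirring polynomial system, a fixed `z ≠ 0`, and a
constant `y` with `y² = G² - zFH` on `Ω`, with `F(z,·,·)` nonvanishing, the
function `φ = (y + G)/F` satisfies the Riccati-type equations, and the
combinations `φ₊ = (y+G)/F`, `φ₋ = (-y+G)/F` satisfy
`φ₊φ₋ = zH/F`, `φ₊+φ₋ = 2G/F`, `φ₊-φ₋ = 2y/F`. -/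
theorem statement5 {n : ℕ} {Ω : Set (ℝ × ℝ)} (hΩ : IsOpen Ω)
    (S : ThirringData n Ω) (hsys : S.System)
    (z : ℂ) (hz : z ≠ 0) (y : ℂ)
    (hy : ∀ x t : ℝ, (x, t) ∈ Ω → y ^ 2 = S.G z x t ^ 2 - z * S.F z x t * S.Hp z x t)
    (hFne : ∀ x t : ℝ, (x, t) ∈ Ω → S.F z x t ≠ 0)
    (φ : ℝ → ℝ → ℂ)
    (hφ : ∀ x t : ℝ, φ x t = (y + S.G z x t) / S.F z x t) :
    (∀ x t : ℝ, (x, t) ∈ Ω →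
      pdx φ x t + 2 * I * S.v x t * φ x t ^ 2 +
        2 * I * (z - S.v x t * S.vs x t) * φ x t = 2 * I * z * S.vs x t) ∧
    (∀ x t : ℝ, (x, t) ∈ Ω →
      pdt φ x t + 2 * I * z⁻¹ * S.u x t * φ x t ^ 2 +
        2 * I * (z⁻¹ - S.u x t * S.us x t) * φ x t = 2 * I * S.us x t) ∧
    (∀ x t : ℝ, (x, t) ∈ Ω →
      ((y + S.G z x t) / S.F z x t) * ((-y + S.G z x t) / S.F z x t)
        = z * S.Hp z x t / S.F z x t) ∧
    (∀ x t : ℝ, (x, t) ∈ Ω →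
      ((y + S.G z x t) / S.F z x t) + ((-y + S.G z x t) / S.F z x t)
        = 2 * S.G z x t / S.F z x t) ∧
    (∀ x t : ℝ, (x, t) ∈ Ω →
      ((y + S.G z x t) / S.F z x t) - ((-y + S.G z x t) / S.F z x t)
        = 2 * y / S.F z x t) := by
  obtain ⟨hFx, hGx, -, hFt, hGt, -⟩ := hsys
  obtain rfl : φ = fun x t => (y + S.G z x t) / S.F z x t := by
    funext x t
    exact hφ x t
  refine ⟨fun x t hxt => ?_, fun x t hxt => ?_, fun x t hxt => ?_, fun x t hxt => ?_,
    fun x t hxt => ?_⟩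
  · have hF : DifferentiableAt ℝ (fun r => S.F z r t) x := by
      unfold ThirringData.F
      exact DifferentiableAt.fun_sum fun j _ => (S.f_diff_x _ x t hxt).mul_const _
    have hG : DifferentiableAt ℝ (fun r => S.G z r t) x := by
      unfold ThirringData.G
      exact DifferentiableAt.fun_sum fun j _ => (S.gc_diff_x _ x t hxt).mul_const _
    have h := deriv_div_riccati (y := y) (k := z * S.Hp z x t) (a := I * S.v x t)
      (b := I * (S.v x t * S.vs x t - z)) (c := I * z * S.vs x t) hF hG (hFne x t hxt)
      ((hFx z x t hxt).trans (by ring)) ((hGx z x t hxt).trans (by ring))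
      ((hy x t hxt).trans (by ring))
    unfold pdx
    linear_combination h
  · have hF : DifferentiableAt ℝ (fun r => S.F z x r) t := by
      unfold ThirringData.F
      exact DifferentiableAt.fun_sum fun j _ => (S.f_diff_t _ x t hxt).mul_const _
    have hG : DifferentiableAt ℝ (fun r => S.G z x r) t := by
      unfold ThirringData.G
      exact DifferentiableAt.fun_sum fun j _ => (S.gc_diff_t _ x t hxt).mul_const _
    -- The system only gives `z F_t`, so divide by `z ≠ 0`.
    have hFt' : pdt (S.F z) x t =
        -2 * (I * (S.u x t * S.us x t - z⁻¹)) * S.F z x t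
          + 4 * (I * z⁻¹ * S.u x t) * S.G z x t := by
      apply mul_left_cancel₀ hz
      rw [hFt z x t hxt]
      field_simp
    have h := deriv_div_riccati (y := y) (k := z * S.Hp z x t) (a := I * z⁻¹ * S.u x t)
      (b := I * (S.u x t * S.us x t - z⁻¹)) (c := I * S.us x t) hF hG (hFne x t hxt)
      hFt' ((hGt z x t hxt).trans (by field_simp)) ((hy x t hxt).trans (by ring))
    unfold pdt
    linear_combination h
  · have hne := hFne x t hxt
    field_simp
    linear_combination -hy x t hxt
  · ring
  · ring
end
end

section
/- Assume the Thirring polynomial system holds on an open rectangle Ω = I × J ⊆ ℝ², with u, v, u⁎, v⁎ and all polynomial coefficients C¹ on Ω. Fix z ∈ ℂ\{0}, ζ ∈ ℂ with ζ² = z, y ∈ ℂ with y² = G(z,x,t)² − z F(z,x,t) H(z,x,t) for all (x,t) ∈ Ω, suppose F(z,x,t) ≠ 0 on Ω, set φ(x,t) = (y + G(z,x,t))/F(z,x,t), fix (x₀,t₀) ∈ Ω, and define ψ₁(x,t) = exp( i ∫_{t₀}^{t} [ z⁻¹ − u(x₀,s)u⁎(x₀,s) + 2 z⁻¹ u(x₀,s)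 φ(x₀,s) ] ds + i ∫_{x₀}^{x} [ z − v(x',t)v⁎(x',t) + 2 v(x',t) φ(x',t) ] dx' ) and ψ₂(x,t) = ζ⁻¹ ψ₁(x,t) φ(x,t). Then the vector Ψ = (ψ₁, ψ₂)ᵀ satisfies Ψ_x = U(ζ,x,t) Ψ, Ψ_t = W(ζ,x,t) Ψ, and i y Ψ = V(ζ,x,t) Ψ on Ω, where U(ζ,x,t) = i[[z − v v⁎, 2ζ v],[2ζ v⁎, −z + v v⁎]], W(ζ,x,t) = i[[z⁻¹ − u u⁎, 2ζ⁻¹ u],[2ζ⁻¹ u⁎, −z⁻¹ + u u⁎]], and V(ζ,x,t) = i[[−G(z,x,t), ζ F(z,x,t)],[−ζ H(z,x,t), G(z,x,t)]]. -/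
/-!
Write `α = z - v v⁎ + 2 v φ` and `β = 1/z - u u⁎ + 2 u φ / z`, so that `ψ₁ = exp(i ∫ (β dt + α dx))`
along a path that first runs in `t` and then in `x`. Once `α_t = β_x` is known, the one-form
`α dx + β dt` is exact on the rectangle, hence `ψ₁` has logarithmic derivatives `i α` and `i β`
(`hasDerivAt_path_integral`). Together with the Riccati equations for `φ = (y + G)/F`
(`hasDerivAt_riccati`), which follow from the equations for `F_x, F_t, G_x, G_t` and
`y² = G² - z F H`, the differential equations for `Ψ` become algebra, and `i y Ψ = V Ψ` follows
from the definition of `φ` and `y² = G² - z F H`.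

The closedness `α_t = β_x` requires the Thirring equations for `u, v, u⁎, v⁎`, which must be
recovered from the polynomial system. Equality of the mixed partials of `F` gives, for all `z`,
`z P F + 2 G (z A - B) = 0` with `A = v_t + 2i u u⁎ v + 2i u`, `B = u_x + 2i u v v⁎ + 2i v`,
`P = (u u⁎)_x - (v v⁎)_t + 4i (v u⁎ - u v⁎)` (`cross_identity`). Since `G` is monic of degree `n + 1`
and `F` has degree at most `n`, the top coefficient gives `A = 0`. For `B = 0` the identity at one
point is not enough: if `B ≠ 0` somewhere, then by continuity `B ≠ 0` nearby, `2 B G = P z F` there,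
and the equation for `z F_t` forces the coefficients of `F` and `G` to vanish one by one from the
bottom, contradicting `g₀ = 1` (`resB_eq_zero`). Finally `P = 0` at the fixed `z`, because `z F ≠ 0`.
-/


noncomputable section

open Complex

/-! ### Closed one-forms on a rectangle -/

/-- The one-form `A dx + B dt` on `ℝ²`. -/
def oneForm (A B : ℝ → ℝ → ℂ) (p : ℝ × ℝ) : ℝ × ℝ →L[ℝ] ℂ :=
  (ContinuousLinearMap.fst ℝ ℝ ℝ).smulRight (A p.1 p.2) +
    (ContinuousLinearMap.snd ℝ ℝ ℝ).smulRight (B p.1 p.2)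

lemma oneForm_apply (A B : ℝ → ℝ → ℂ) (p w : ℝ × ℝ) :
    oneForm A B p w = w.1 * A p.1 p.2 + w.2 * B p.1 p.2 := by
  simp [oneForm]

/-- The `x`-partial of `k` is its Fréchet derivative in the direction `(1, 0)`. -/
lemma hasDerivAt_slice_x {k : ℝ → ℝ → ℂ} {x t : ℝ} {k' : ℝ × ℝ →L[ℝ] ℂ}
    (hk : HasFDerivAt (fun p : ℝ × ℝ => k p.1 p.2) k' (x, t)) :
    HasDerivAt (fun x' => k x' t) (k' (1, 0)) x := by
  have h : HasDerivAt (fun x' : ℝ => (x', t)) ((1 : ℝ), (0 : ℝ)) x :=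
    (hasDerivAt_id x).prodMk (hasDerivAt_const x t)
  exact HasFDerivAt.comp_hasDerivAt x hk h

lemma hasDerivAt_slice_t {k : ℝ → ℝ → ℂ} {x t : ℝ} {k' : ℝ × ℝ →L[ℝ] ℂ}
    (hk : HasFDerivAt (fun p : ℝ × ℝ => k p.1 p.2) k' (x, t)) :
    HasDerivAt (fun t' => k x t') (k' (0, 1)) t := by
  have h : HasDerivAt (fun t' : ℝ => (x, t')) ((0 : ℝ), (1 : ℝ)) t :=
    (hasDerivAt_const t x).prodMk (hasDerivAt_id t)
  exact HasFDerivAt.comp_hasDerivAt t hk h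

lemma hasDerivAt_pdx {k : ℝ → ℝ → ℂ} {x t : ℝ}
    (hk : DifferentiableAt ℝ (fun p : ℝ × ℝ => k p.1 p.2) (x, t)) :
    HasDerivAt (fun x' => k x' t) (pdx k x t) x :=
  (hasDerivAt_slice_x hk.hasFDerivAt).differentiableAt.hasDerivAt

lemma hasDerivAt_pdt {k : ℝ → ℝ → ℂ} {x t : ℝ}
    (hk : DifferentiableAt ℝ (fun p : ℝ × ℝ => k p.1 p.2) (x, t)) :
    HasDerivAt (fun t' => k x t') (pdt k x t) t :=
  (hasDerivAt_slice_t hk.hasFDerivAt).differentiableAt.hasDerivAt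

lemma fderiv_eq_oneForm {k : ℝ → ℝ → ℂ} {x t : ℝ}
    (hk : DifferentiableAt ℝ (fun p : ℝ × ℝ => k p.1 p.2) (x, t)) :
    fderiv ℝ (fun p : ℝ × ℝ => k p.1 p.2) (x, t) = oneForm (pdx k) (pdt k) (x, t) := by
  have hx : pdx k x t = _ := (hasDerivAt_slice_x hk.hasFDerivAt).deriv
  have ht : pdt k x t = _ := (hasDerivAt_slice_t hk.hasFDerivAt).deriv
  ext <;> simp [oneForm_apply, hx, ht]

lemma differentiableAt_oneForm_and_fderiv {A B : ℝ → ℝ → ℂ} {p : ℝ × ℝ}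
    (hA : DifferentiableAt ℝ (fun p : ℝ × ℝ => A p.1 p.2) p)
    (hB : DifferentiableAt ℝ (fun p : ℝ × ℝ => B p.1 p.2) p) :
    DifferentiableAt ℝ (oneForm A B) p ∧
    ∀ v w, fderiv ℝ (oneForm A B) p v w =
      w.1 * oneForm (pdx A) (pdt A) p v + w.2 * oneForm (pdx B) (pdt B) p v := by
  have h1 := (ContinuousLinearMap.smulRightL ℝ (ℝ × ℝ) ℂ
    (ContinuousLinearMap.fst ℝ ℝ ℝ)).hasFDerivAt.comp p hA.hasFDerivAt
  have h2 := (ContinuousLinearMap.smulRightL ℝ (ℝ × ℝ) ℂ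
    (ContinuousLinearMap.snd ℝ ℝ ℝ)).hasFDerivAt.comp p hB.hasFDerivAt
  have h : HasFDerivAt (oneForm A B) _ p := h1.add h2
  refine ⟨h.differentiableAt, fun v w => ?_⟩
  rw [h.fderiv, ← fderiv_eq_oneForm hA, ← fderiv_eq_oneForm hB]
  simp

/-- Equality of mixed partials: if the partials of `k` are themselves differentiable, then
`k_{xt} = k_{tx}`. -/
lemma mixed_partials {Ω : Set (ℝ × ℝ)} (hΩ : IsOpen Ω) {k A B : ℝ → ℝ → ℂ}
    (hk : ∀ p ∈ Ω, DifferentiableAt ℝ (fun p : ℝ × ℝ => k p.1 p.2) p)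
    (hkA : ∀ x t, (x, t) ∈ Ω → pdx k x t = A x t)
    (hkB : ∀ x t, (x, t) ∈ Ω → pdt k x t = B x t)
    {x t : ℝ} (hxt : (x, t) ∈ Ω)
    (hA : DifferentiableAt ℝ (fun p : ℝ × ℝ => A p.1 p.2) (x, t))
    (hB : DifferentiableAt ℝ (fun p : ℝ × ℝ => B p.1 p.2) (x, t)) :
    pdt A x t = pdx B x t := by
  obtain ⟨hd, hf⟩ := differentiableAt_oneForm_and_fderiv hA hB
  have hev : ∀ᶠ q in nhds (x, t),
      HasFDerivAt (fun p : ℝ × ℝ => k p.1 p.2) (oneForm A B q) q := by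
    filter_upwards [hΩ.mem_nhds hxt] with q hq
    have h1 := (hk q hq).hasFDerivAt
    rw [fderiv_eq_oneForm (hk q hq)] at h1
    convert h1 using 1
    ext <;> simp [oneForm_apply, hkA q.1 q.2 hq, hkB q.1 q.2 hq]
  have h := second_derivative_symmetric_of_eventually hev hd.hasFDerivAt (0, 1) (1, 0)
  simpa [hf, oneForm_apply] using h

/-- Poincaré lemma in the form needed: a closed one-form on an open rectangle integrates, along the
path running first in `t` and then in `x`, to a function with the prescribed partials. -/
lemma hasDerivAt_path_integral {a b c d : ℝ} {A B : ℝ → ℝ → ℂ}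
    (hA : ∀ p ∈ Set.Ioo a b ×ˢ Set.Ioo c d, DifferentiableAt ℝ (fun p : ℝ × ℝ => A p.1 p.2) p)
    (hB : ∀ p ∈ Set.Ioo a b ×ˢ Set.Ioo c d, DifferentiableAt ℝ (fun p : ℝ × ℝ => B p.1 p.2) p)
    (hAB : ∀ x t, (x, t) ∈ Set.Ioo a b ×ˢ Set.Ioo c d → pdt A x t = pdx B x t)
    {x₀ t₀ x t : ℝ} (h₀ : (x₀, t₀) ∈ Set.Ioo a b ×ˢ Set.Ioo c d)
    (hxt : (x, t) ∈ Set.Ioo a b ×ˢ Set.Ioo c d) :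
    HasDerivAt (fun x' => (∫ s in t₀..t, B x₀ s) + ∫ r in x₀..x', A r t) (A x t) x ∧
    HasDerivAt (fun t' => (∫ s in t₀..t', B x₀ s) + ∫ r in x₀..x, A r t') (B x t) t := by
  have hop : IsOpen (Set.Ioo a b ×ˢ Set.Ioo c d) := isOpen_Ioo.prod isOpen_Ioo
  obtain ⟨Θ, hΘ⟩ := ((convex_Ioo a b).prod (convex_Ioo c d)).exists_forall_hasFDerivAt_of_fderiv_symmetric
    (ω := oneForm A B) hop
    (fun p hp => (differentiableAt_oneForm_and_fderiv (hA p hp) (hB p hp)).1.differentiableWithinAt)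
    (fun p hp v w => by
      have := hAB p.1 p.2 hp
      simp only [(differentiableAt_oneForm_and_fderiv (hA p hp) (hB p hp)).2, oneForm_apply, this]
      ring)
  have hx : ∀ x t, (x, t) ∈ Set.Ioo a b ×ˢ Set.Ioo c d →
      HasDerivAt (fun x' => Θ (x', t)) (A x t) x := fun x t h => by
    simpa [oneForm_apply] using hasDerivAt_slice_x (k := fun x t => Θ (x, t)) (hΘ _ h)
  have ht : ∀ x t, (x, t) ∈ Set.Ioo a b ×ˢ Set.Ioo c d →
      HasDerivAt (fun t' => Θ (x, t')) (B x t) t := fun x t h => by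
    simpa [oneForm_apply] using hasDerivAt_slice_t (k := fun x t => Θ (x, t)) (hΘ _ h)
  have key : ∀ x t, (x, t) ∈ Set.Ioo a b ×ˢ Set.Ioo c d →
      (∫ s in t₀..t, B x₀ s) + (∫ r in x₀..x, A r t) = Θ (x, t) - Θ (x₀, t₀) := by
    intro x t h
    have hs1 : ∀ s ∈ Set.uIcc t₀ t, (x₀, s) ∈ Set.Ioo a b ×ˢ Set.Ioo c d := fun s hs =>
      ⟨h₀.1, Set.ordConnected_Ioo.uIcc_subset h₀.2 h.2 hs⟩
    have hs2 : ∀ r ∈ Set.uIcc x₀ x, (r, t) ∈ Set.Ioo a b ×ˢ Set.Ioo c d := fun r hr =>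
      ⟨Set.ordConnected_Ioo.uIcc_subset h₀.1 h.1 hr, h.2⟩
    have e1 := intervalIntegral.integral_eq_sub_of_hasDerivAt (fun s hs => ht x₀ s (hs1 s hs))
      (ContinuousOn.intervalIntegrable fun s hs =>
        (hasDerivAt_pdt (hB _ (hs1 s hs))).continuousAt.continuousWithinAt)
    have e2 := intervalIntegral.integral_eq_sub_of_hasDerivAt (fun r hr => hx r t (hs2 r hr))
      (ContinuousOn.intervalIntegrable fun r hr =>
        (hasDerivAt_pdx (hA _ (hs2 r hr))).continuousAt.continuousWithinAt)
    rw [e1, e2]; ring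
  constructor
  · refine ((hx x t hxt).sub_const (Θ (x₀, t₀))).congr_of_eventuallyEq ?_
    filter_upwards [isOpen_Ioo.mem_nhds hxt.1] with x' hx' using key x' t ⟨hx', hxt.2⟩
  · refine ((ht x t hxt).sub_const (Θ (x₀, t₀))).congr_of_eventuallyEq ?_
    filter_upwards [isOpen_Ioo.mem_nhds hxt.2] with s hs using key x s ⟨hxt.1, hs⟩

/-! ### The system as identities between polynomials -/

open Polynomial in
/-- `F(·,x,t)` as an element of `ℂ[X]`. -/
def ThirringData.FPoly {n : ℕ} {Ω : Set (ℝ × ℝ)} (S : ThirringData n Ω) (x t : ℝ) : ℂ[X] :=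
  ∑ j ∈ Finset.range (n + 1), C (S.f (n - j) x t) * X ^ j

open Polynomial in
/-- `G(·,x,t)` as an element of `ℂ[X]`. -/
def ThirringData.GPoly {n : ℕ} {Ω : Set (ℝ × ℝ)} (S : ThirringData n Ω) (x t : ℝ) : ℂ[X] :=
  ∑ j ∈ Finset.range (n + 2), C (S.gc (n + 1 - j) x t) * X ^ j

namespace ThirringData

variable {n : ℕ} {Ω : Set (ℝ × ℝ)} (S : ThirringData n Ω)

lemma eval_FPoly (z : ℂ) (x t : ℝ) : (S.FPoly x t).eval z = S.F z x t := by
  simp [FPoly, F, Polynomial.eval_finsetSum]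

lemma eval_GPoly (z : ℂ) (x t : ℝ) : (S.GPoly x t).eval z = S.G z x t := by
  simp [GPoly, G, Polynomial.eval_finsetSum]

lemma coeff_FPoly (x t : ℝ) (k : ℕ) :
    (S.FPoly x t).coeff k = if k < n + 1 then S.f (n - k) x t else 0 := by
  simp [FPoly, Polynomial.finsetSum_coeff, Polynomial.coeff_C_mul, Polynomial.coeff_X_pow]

lemma coeff_GPoly (x t : ℝ) (k : ℕ) :
    (S.GPoly x t).coeff k = if k < n + 2 then S.gc (n + 1 - k) x t else 0 := by
  simp [GPoly, Polynomial.finsetSum_coeff, Polynomial.coeff_C_mul, Polynomial.coeff_X_pow]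

/-- Residual `v_t + 2i u u⁎ v + 2i u` of one equation of the Thirring system. -/
def resA (x t : ℝ) : ℂ :=
  pdt S.v x t + 2 * I * S.u x t * S.us x t * S.v x t + 2 * I * S.u x t

/-- Residual `u_x + 2i u v v⁎ + 2i v` of the other equation for `u` and `v`. -/
def resB (x t : ℝ) : ℂ :=
  pdx S.u x t + 2 * I * S.u x t * S.v x t * S.vs x t + 2 * I * S.v x t

/-- Residual `(u u⁎)_x - (v v⁎)_t + 4i(v u⁎ - u v⁎)` of the balance law for the densities
`u u⁎` and `v v⁎`. -/
def resP (x t : ℝ) : ℂ :=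
  pdx S.u x t * S.us x t + S.u x t * pdx S.us x t
    - (pdt S.v x t * S.vs x t + S.v x t * pdt S.vs x t)
    + 4 * I * (S.v x t * S.us x t - S.u x t * S.vs x t)

variable {S}

/-! ### Recovering the Thirring equations -/

lemma differentiableAt_F (hf : ∀ j, ∀ p ∈ Ω, DifferentiableAt ℝ (fun p : ℝ × ℝ => S.f j p.1 p.2) p)
    (z : ℂ) : ∀ p ∈ Ω, DifferentiableAt ℝ (fun p : ℝ × ℝ => S.F z p.1 p.2) p := fun p hp => by
  simp only [F]
  exact DifferentiableAt.fun_sum fun j _ => (hf _ p hp).mul_const _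

lemma differentiableAt_G
    (hg : ∀ j, ∀ p ∈ Ω, DifferentiableAt ℝ (fun p : ℝ × ℝ => S.gc j p.1 p.2) p)
    (z : ℂ) : ∀ p ∈ Ω, DifferentiableAt ℝ (fun p : ℝ × ℝ => S.G z p.1 p.2) p := fun p hp => by
  simp only [G]
  exact DifferentiableAt.fun_sum fun j _ => (hg _ p hp).mul_const _

/-- The identity `F_{xt} = F_{tx}` written out with the system. The terms in `H` and in `G²`
cancel, so that only the residuals remain. The outer factor `z` makes the identity
trivial at `z = 0`, where the equation for `z F_t` does not determine `F_t`. -/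
lemma cross_identity (hsys : S.System) (hΩ : IsOpen Ω)
    (hf : ∀ j, ∀ p ∈ Ω, DifferentiableAt ℝ (fun p : ℝ × ℝ => S.f j p.1 p.2) p)
    (hg : ∀ j, ∀ p ∈ Ω, DifferentiableAt ℝ (fun p : ℝ × ℝ => S.gc j p.1 p.2) p)
    (hu : ∀ p ∈ Ω, DifferentiableAt ℝ (fun p : ℝ × ℝ => S.u p.1 p.2) p)
    (hv : ∀ p ∈ Ω, DifferentiableAt ℝ (fun p : ℝ × ℝ => S.v p.1 p.2) p)
    (hus : ∀ p ∈ Ω, DifferentiableAt ℝ (fun p : ℝ × ℝ => S.us p.1 p.2) p)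
    (hvs : ∀ p ∈ Ω, DifferentiableAt ℝ (fun p : ℝ × ℝ => S.vs p.1 p.2) p)
    {x t : ℝ} (hxt : (x, t) ∈ Ω) (z : ℂ) :
    z * (z * S.resP x t * S.F z x t + 2 * S.G z x t * (z * S.resA x t - S.resB x t)) = 0 := by
  rcases eq_or_ne z 0 with rfl | hz
  · simp
  obtain ⟨hFx, hGx, -, hFt, hGt, -⟩ := hsys
  have hF := differentiableAt_F hf z
  have hG := differentiableAt_G hg z
  have hFt' : ∀ x t, (x, t) ∈ Ω → pdt (S.F z) x t = z⁻¹ *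
      (-2 * I * (z * S.u x t * S.us x t - 1) * S.F z x t + 4 * I * S.u x t * S.G z x t) := by
    intro x t h
    rw [← hFt z x t h, inv_mul_cancel_left₀ hz]
  have dF := hF _ hxt
  have dG := hG _ hxt
  have du := hu _ hxt
  have dv := hv _ hxt
  have dus := hus _ hxt
  have dvs := hvs _ hxt
  have hm := mixed_partials hΩ hF (hFx z) hFt' hxt (by fun_prop) (by fun_prop)
  have e1 : pdt (fun x t => -2 * I * (S.v x t * S.vs x t - z) * S.F z x t
      + 4 * I * S.v x t * S.G z x t) x t = _ :=
    (((((hasDerivAt_pdt dv).mul (hasDerivAt_pdt dvs)).sub_const z).const_mul (-2 * I)).mul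
      (hasDerivAt_pdt dF)).add
      (((hasDerivAt_pdt dv).const_mul (4 * I)).mul (hasDerivAt_pdt dG)) |>.deriv
  have e2 : pdx (fun x t => z⁻¹ * (-2 * I * (z * S.u x t * S.us x t - 1) * S.F z x t
      + 4 * I * S.u x t * S.G z x t)) x t = _ :=
    (((((((hasDerivAt_pdx du).const_mul z).mul (hasDerivAt_pdx dus)).sub_const 1).const_mul
      (-2 * I)).mul (hasDerivAt_pdx dF)).add
      (((hasDerivAt_pdx du).const_mul (4 * I)).mul (hasDerivAt_pdx dG))).const_mul z⁻¹ |>.deriv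
  rw [e1, e2, hFx z x t hxt, hGx z x t hxt, hGt z x t hxt, hFt' x t hxt] at hm
  simp only [resA, resB, resP]
  simp only [Pi.mul_apply] at hm
  field_simp at hm
  linear_combination z / 2 * hm


/-- `cross_identity` read as an identity in `ℂ[X]`, with the factor `z` cancelled and the
coefficients at `X ^ k` compared. -/
lemma poly_identity (hid : ∀ z : ℂ, ∀ x t : ℝ, (x, t) ∈ Ω →
      z * (z * S.resP x t * S.F z x t + 2 * S.G z x t * (z * S.resA x t - S.resB x t)) = 0)
    {x t : ℝ} (hxt : (x, t) ∈ Ω) (k : ℕ) :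
    S.resP x t * (Polynomial.X * S.FPoly x t).coeff k
      + 2 * S.resA x t * (Polynomial.X * S.GPoly x t).coeff k
      - 2 * S.resB x t * (S.GPoly x t).coeff k = 0 := by
  have h : Polynomial.X * (Polynomial.C (S.resP x t) * (Polynomial.X * S.FPoly x t)
      + Polynomial.C (2 * S.resA x t) * (Polynomial.X * S.GPoly x t)
      - Polynomial.C (2 * S.resB x t) * S.GPoly x t) = 0 := by
    refine Polynomial.funext fun z => ?_
    simp only [Polynomial.eval_mul, Polynomial.eval_X, Polynomial.eval_sub, Polynomial.eval_add,
      Polynomial.eval_C, eval_FPoly, eval_GPoly, Polynomial.eval_zero]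
    linear_combination hid z x t hxt
  have hcoeff := congrArg (fun p => Polynomial.coeff p k)
    ((mul_eq_zero.1 h).resolve_left Polynomial.X_ne_zero)
  simpa only [Polynomial.coeff_sub, Polynomial.coeff_add, Polynomial.coeff_C_mul,
    Polynomial.coeff_zero] using hcoeff

/-- The top coefficient, at `X ^ (n + 2)`, of the polynomial identity is `2 A g₀ = 2 A`. -/
lemma resA_eq_zero (hid : ∀ z : ℂ, ∀ x t : ℝ, (x, t) ∈ Ω →
      z * (z * S.resP x t * S.F z x t + 2 * S.G z x t * (z * S.resA x t - S.resB x t)) = 0)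
    {x t : ℝ} (hxt : (x, t) ∈ Ω) : S.resA x t = 0 := by
  simpa [coeff_FPoly, coeff_GPoly, S.hg0] using poly_identity hid hxt (n + 1 + 1)

/-- Comparison of coefficients in the equation for `F_t`. -/
lemma coeff_t_equation (hsys : S.System) {x t : ℝ} (hxt : (x, t) ∈ Ω) (k : ℕ) :
    (if k = 0 then 0 else deriv (fun t' => (S.FPoly x t').coeff (k - 1)) t) =
      -2 * I * S.u x t * S.us x t * (Polynomial.X * S.FPoly x t).coeff k
        + 2 * I * (S.FPoly x t).coeff k + 4 * I * S.u x t * (S.GPoly x t).coeff k := by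
  obtain ⟨-, -, -, hFt, -, -⟩ := hsys
  let D : Polynomial ℂ := ∑ j ∈ Finset.range (n + 1),
    Polynomial.C (pdt (S.f (n - j)) x t) * Polynomial.X ^ j
  have hD : ∀ z, D.eval z = pdt (S.F z) x t := fun z => by
    have : HasDerivAt (fun t' => S.F z x t') (∑ j ∈ Finset.range (n + 1),
        pdt (S.f (n - j)) x t * z ^ j) t := by
      simp only [F]
      exact HasDerivAt.fun_sum fun j _ => (S.f_diff_t _ x t hxt).hasDerivAt.mul_const _
    rw [pdt, this.deriv]
    simp [D, Polynomial.eval_finsetSum]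
  have hDc : ∀ j, D.coeff j = deriv (fun t' => (S.FPoly x t').coeff j) t := fun j => by
    simp only [coeff_FPoly, D, Polynomial.finsetSum_coeff, Polynomial.coeff_C_mul,
      Polynomial.coeff_X_pow]
    by_cases hj : j < n + 1 <;> simp [hj, pdt]
  have h : Polynomial.X * D =
      Polynomial.C (-2 * I * S.u x t * S.us x t) * (Polynomial.X * S.FPoly x t)
        + Polynomial.C (2 * I) * S.FPoly x t + Polynomial.C (4 * I * S.u x t) * S.GPoly x t := by
    refine Polynomial.funext fun z => ?_
    simp only [Polynomial.eval_mul, Polynomial.eval_X, Polynomial.eval_add,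
      Polynomial.eval_C, eval_FPoly, eval_GPoly, hD]
    linear_combination hFt z x t hxt
  have hcoeff := congrArg (fun p => Polynomial.coeff p k) h
  simp only [Polynomial.coeff_add, Polynomial.coeff_C_mul] at hcoeff
  rw [← hcoeff]
  cases k <;> simp [hDc]

/-- If `B ≠ 0` at a point, then it is nonzero on a `t`-interval around it, where the polynomial
identity reads `2 B G = P z F`. Together with the equation for `z F_t` this kills the coefficients
of `F` and `G` one after the other, contradicting `g₀ = 1`. -/
lemma resB_eq_zero (hsys : S.System) (hΩ : IsOpen Ω)
    (hid : ∀ z : ℂ, ∀ x t : ℝ, (x, t) ∈ Ω →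
      z * (z * S.resP x t * S.F z x t + 2 * S.G z x t * (z * S.resA x t - S.resB x t)) = 0)
    (hcont : ContinuousOn (fun p : ℝ × ℝ => S.resB p.1 p.2) Ω)
    {x t : ℝ} (hxt : (x, t) ∈ Ω) : S.resB x t = 0 := by
  by_contra hB
  have hslice : Continuous (fun t' : ℝ => (x, t')) := by fun_prop
  have hev : ∀ᶠ s in nhds t, (x, s) ∈ Ω ∧ S.resB x s ≠ 0 := by
    refine (hslice.continuousAt.eventually (hΩ.mem_nhds hxt)).and ?_
    exact ContinuousAt.eventually_ne (g := fun s => S.resB x s)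
      ((hcont.continuousAt (hΩ.mem_nhds hxt)).comp (f := fun t' : ℝ => (x, t'))
        hslice.continuousAt) hB
  obtain ⟨N, hN, hNo, htN⟩ := eventually_nhds_iff.1 hev
  have key : ∀ k, ∀ s ∈ N, (S.FPoly x s).coeff k = 0 ∧ (S.GPoly x s).coeff k = 0 := by
    intro k
    induction k with
    | zero =>
      intro s hs
      obtain ⟨h1, h2⟩ := hN s hs
      have hG : (S.GPoly x s).coeff 0 = 0 := by
        have := poly_identity hid h1 0
        simpa [h2] using this
      have := coeff_t_equation hsys h1 0
      exact ⟨by simpa [hG] using this, hG⟩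
    | succ k ih =>
      intro s hs
      obtain ⟨h1, h2⟩ := hN s hs
      have hF := (ih s hs).1
      have hG : (S.GPoly x s).coeff (k + 1) = 0 := by
        have := poly_identity hid h1 (k + 1)
        simpa [h2, hF, resA_eq_zero hid h1] using this
      have hd : deriv (fun t' => (S.FPoly x t').coeff k) s = 0 := by
        have : (fun t' => (S.FPoly x t').coeff k) =ᶠ[nhds s] fun _ => 0 := by
          filter_upwards [hNo.mem_nhds hs] with r hr using (ih r hr).1
        simp [this.deriv_eq]
      have := coeff_t_equation hsys h1 (k + 1)
      exact ⟨by simpa [hG, hF, hd] using this, hG⟩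
  have := (key (n + 1) t htN).2
  simp [coeff_GPoly, S.hg0] at this


/-! ### Closedness and the Riccati equation -/

/-- Closedness of the one-form `α dx + β dt` in the exponent of `ψ₁`: given the Riccati equations
for `φ`, the difference `α_t - β_x` is a combination of the three residuals. -/
lemma pdx_pdt_eq {x t : ℝ} (hA : S.resA x t = 0) (hB : S.resB x t = 0) (hP : S.resP x t = 0)
    {z : ℂ} (hz : z ≠ 0) {φ : ℝ → ℝ → ℂ}
    (hu : DifferentiableAt ℝ (fun p : ℝ × ℝ => S.u p.1 p.2) (x, t))
    (hv : DifferentiableAt ℝ (fun p : ℝ × ℝ => S.v p.1 p.2) (x, t))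
    (hus : DifferentiableAt ℝ (fun p : ℝ × ℝ => S.us p.1 p.2) (x, t))
    (hvs : DifferentiableAt ℝ (fun p : ℝ × ℝ => S.vs p.1 p.2) (x, t))
    (hφx : HasDerivAt (fun x' => φ x' t) (I * (2 * (z * S.vs x t)
      + 2 * (S.v x t * S.vs x t - z) * φ x t - 2 * S.v x t * φ x t ^ 2)) x)
    (hφt : HasDerivAt (fun t' => φ x t') (I * (2 * S.us x t
      + 2 * (S.u x t * S.us x t - z⁻¹) * φ x t - 2 * (z⁻¹ * S.u x t) * φ x t ^ 2)) t) :
    pdt (fun x t => z - S.v x t * S.vs x t + 2 * S.v x t * φ x t) x t =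
      pdx (fun x t => z⁻¹ - S.u x t * S.us x t + 2 * z⁻¹ * S.u x t * φ x t) x t := by
  have e1 : pdt (fun x t => z - S.v x t * S.vs x t + 2 * S.v x t * φ x t) x t = _ :=
    ((((hasDerivAt_pdt hv).mul (hasDerivAt_pdt hvs)).const_sub z).add
      (((hasDerivAt_pdt hv).const_mul 2).mul hφt)).deriv
  have e2 : pdx (fun x t => z⁻¹ - S.u x t * S.us x t + 2 * z⁻¹ * S.u x t * φ x t) x t = _ :=
    ((((hasDerivAt_pdx hu).mul (hasDerivAt_pdx hus)).const_sub z⁻¹).add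
      (((hasDerivAt_pdx hu).const_mul (2 * z⁻¹)).mul hφx)).deriv
  rw [e1, e2]
  simp only [resA, resB, resP] at hA hB hP
  have hzz : z * z⁻¹ = 1 := mul_inv_cancel₀ hz
  linear_combination hP + 2 * φ x t * hA - 2 * z⁻¹ * φ x t * hB
    - 4 * I * S.u x t * (S.vs x t - φ x t) * hzz

end ThirringData

/-- Riccati equation for `φ = (y + G)/F`: if `F` and `G` evolve linearly and
`y² = G² - z F H`, then `φ' = i(2α + 2wφ - 2βφ²)`. The `x`-flow has `α = z v⁎`, `β = v`,
`w = v v⁎ - z`; the `t`-flow has `α = u⁎`, `β = u/z`, `w = u u⁎ - 1/z`. -/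
lemma hasDerivAt_riccati {F G : ℝ → ℂ} {F' G' H y z α β w : ℂ} {r : ℝ}
    (hF : HasDerivAt F F' r) (hG : HasDerivAt G G' r) (hF0 : F r ≠ 0)
    (hy : y ^ 2 = G r ^ 2 - z * F r * H)
    (hF' : F' = -2 * I * w * F r + 4 * I * β * G r)
    (hG' : G' = 2 * I * (α * F r + β * z * H)) :
    HasDerivAt (fun r => (y + G r) / F r)
      (I * (2 * α + 2 * w * ((y + G r) / F r) - 2 * β * ((y + G r) / F r) ^ 2)) r := by
  refine ((hG.const_add y).fun_div hF hF0).congr_deriv ?_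
  rw [hF', hG']
  field_simp
  linear_combination (2 * β) * hy

/-! ### The Baker–Akhiezer vector -/

/-- on an open rectangle `Ω = I × J`, with `C¹` data, the
Baker–Akhiezer vector `Ψ = (ψ₁, ψ₂)ᵀ` built from `φ = (y+G)/F` satisfies
`Ψ_x = U Ψ`, `Ψ_t = W Ψ`, and `i y Ψ = V Ψ`. -/
theorem statement6 {n : ℕ} (a b c d : ℝ) {Ω : Set (ℝ × ℝ)}
    (hΩ : Ω = Set.Ioo a b ×ˢ Set.Ioo c d)
    (S : ThirringData n Ω) (hsys : S.System)
    (hfC1 : ∀ j : ℕ, ContDiffOn ℝ 1 (fun p : ℝ × ℝ => S.f j p.1 p.2) Ω)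
    (hhC1 : ∀ j : ℕ, ContDiffOn ℝ 1 (fun p : ℝ × ℝ => S.h j p.1 p.2) Ω)
    (hgC1 : ∀ j : ℕ, ContDiffOn ℝ 1 (fun p : ℝ × ℝ => S.gc j p.1 p.2) Ω)
    (huC1 : ContDiffOn ℝ 1 (fun p : ℝ × ℝ => S.u p.1 p.2) Ω)
    (hvC1 : ContDiffOn ℝ 1 (fun p : ℝ × ℝ => S.v p.1 p.2) Ω)
    (husC1 : ContDiffOn ℝ 1 (fun p : ℝ × ℝ => S.us p.1 p.2) Ω)
    (hvsC1 : ContDiffOn ℝ 1 (fun p : ℝ × ℝ => S.vs p.1 p.2) Ω)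
    (z ζ : ℂ) (hz : z ≠ 0) (hζ : ζ ^ 2 = z) (y : ℂ)
    (hy : ∀ x t : ℝ, (x, t) ∈ Ω → y ^ 2 = S.G z x t ^ 2 - z * S.F z x t * S.Hp z x t)
    (hFne : ∀ x t : ℝ, (x, t) ∈ Ω → S.F z x t ≠ 0)
    (x₀ t₀ : ℝ) (h₀ : (x₀, t₀) ∈ Ω)
    (φ : ℝ → ℝ → ℂ)
    (hφ : ∀ x t : ℝ, φ x t = (y + S.G z x t) / S.F z x t)
    (ψ₁ ψ₂ : ℝ → ℝ → ℂ)
    (hψ₁ : ∀ x t : ℝ, ψ₁ x t = Complex.exp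
      (I * (∫ s in t₀..t, (z⁻¹ - S.u x₀ s * S.us x₀ s + 2 * z⁻¹ * S.u x₀ s * φ x₀ s)) +
       I * (∫ x' in x₀..x, (z - S.v x' t * S.vs x' t + 2 * S.v x' t * φ x' t))))
    (hψ₂ : ∀ x t : ℝ, ψ₂ x t = ζ⁻¹ * ψ₁ x t * φ x t) :
    ∀ x t : ℝ, (x, t) ∈ Ω →
      ((fun i => deriv (fun x' => ![ψ₁ x' t, ψ₂ x' t] i) x)
          = (S.Umat ζ x t).mulVec ![ψ₁ x t, ψ₂ x t]) ∧
      ((fun i => deriv (fun t' => ![ψ₁ x t', ψ₂ x t'] i) t)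
          = (S.Wmat ζ x t).mulVec ![ψ₁ x t, ψ₂ x t]) ∧
      ((I * y) • ![ψ₁ x t, ψ₂ x t] = (S.Vmat ζ x t).mulVec ![ψ₁ x t, ψ₂ x t]) := by
  have hop : IsOpen Ω := hΩ ▸ isOpen_Ioo.prod isOpen_Ioo
  have diff : ∀ {k : ℝ → ℝ → ℂ}, ContDiffOn ℝ 1 (fun p : ℝ × ℝ => k p.1 p.2) Ω →
      ∀ p ∈ Ω, DifferentiableAt ℝ (fun p : ℝ × ℝ => k p.1 p.2) p := fun hk p hp =>
    (hk.contDiffAt (hop.mem_nhds hp)).differentiableAt one_ne_zero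
  have hf := fun j => diff (hfC1 j)
  have hg := fun j => diff (hgC1 j)
  have hu := diff huC1
  have hv := diff hvC1
  have hus := diff husC1
  have hvs := diff hvsC1
  have hid : ∀ z : ℂ, ∀ x t : ℝ, (x, t) ∈ Ω → _ := fun z x t h =>
    ThirringData.cross_identity hsys hop hf hg hu hv hus hvs h z
  have hA : ∀ x t : ℝ, (x, t) ∈ Ω → S.resA x t = 0 := fun x t h =>
    ThirringData.resA_eq_zero hid h
  have hcont : ContinuousOn (fun p : ℝ × ℝ => S.resB p.1 p.2) Ω := by
    have hux : ContinuousOn (fun p : ℝ × ℝ => pdx S.u p.1 p.2) Ω := by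
      refine ((huC1.continuousOn_fderiv_of_isOpen hop le_rfl).clm_apply
        (continuousOn_const (c := ((1 : ℝ), (0 : ℝ))))).congr fun p hp => ?_
      exact (hasDerivAt_slice_x (hu p hp).hasFDerivAt).deriv
    have := huC1.continuousOn
    have := hvC1.continuousOn
    have := hvsC1.continuousOn
    unfold ThirringData.resB
    fun_prop
  have hB : ∀ x t : ℝ, (x, t) ∈ Ω → S.resB x t = 0 := fun x t h =>
    ThirringData.resB_eq_zero hsys hop hid hcont h
  -- With `A = B = 0` the cross identity reduces to `z² P F = 0` at the fixed `z`.
  have hP : ∀ x t : ℝ, (x, t) ∈ Ω → S.resP x t = 0 := fun x t h => by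
    simpa [hz, hA x t h, hB x t h, hFne x t h] using hid z x t h
  have hF := ThirringData.differentiableAt_F hf z
  have hG := ThirringData.differentiableAt_G hg z
  obtain rfl : φ = fun x t => (y + S.G z x t) / S.F z x t :=
    funext fun x => funext fun t => hφ x t
  obtain ⟨hFx, hGx, -, hFt, hGt, -⟩ := hsys
  have hφx := fun x t (h : (x, t) ∈ Ω) =>
    hasDerivAt_riccati (y := y) (z := z) (H := S.Hp z x t) (α := z * S.vs x t) (β := S.v x t)
      (w := S.v x t * S.vs x t - z)
      (hasDerivAt_pdx (hF _ h)) (hasDerivAt_pdx (hG _ h)) (hFne x t h) (hy x t h)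
      (hFx z x t h) (by rw [hGx z x t h]; ring)
  have hφt := fun x t (h : (x, t) ∈ Ω) =>
    hasDerivAt_riccati (y := y) (z := z) (H := S.Hp z x t) (α := S.us x t) (β := z⁻¹ * S.u x t)
      (w := S.u x t * S.us x t - z⁻¹)
      (hasDerivAt_pdt (hF _ h)) (hasDerivAt_pdt (hG _ h)) (hFne x t h) (hy x t h)
      (by
        apply mul_left_cancel₀ hz
        rw [hFt z x t h]; field_simp)
      (by rw [hGt z x t h]; field_simp)
  have hφd : ∀ p ∈ Ω,
      DifferentiableAt ℝ (fun p : ℝ × ℝ => (y + S.G z p.1 p.2) / S.F z p.1 p.2) p := fun p hp =>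
    by
    have h1 := hG p hp
    have h2 := hF p hp
    have h3 : S.F z p.1 p.2 ≠ 0 := hFne p.1 p.2 hp
    simp only [div_eq_mul_inv]
    exact (h1.const_add y).fun_mul (h2.fun_inv h3)
  intro x t hxt
  have hpath := hasDerivAt_path_integral (a := a) (b := b) (c := c) (d := d)
    (A := fun x t => z - S.v x t * S.vs x t + 2 * S.v x t * ((y + S.G z x t) / S.F z x t))
    (B := fun x t => z⁻¹ - S.u x t * S.us x t + 2 * z⁻¹ * S.u x t * ((y + S.G z x t) / S.F z x t))
    (x₀ := x₀) (t₀ := t₀) (x := x) (t := t)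
    (fun p hp => by
      rw [← hΩ] at hp
      exact (((hv p hp).fun_mul (hvs p hp)).const_sub z).fun_add
        (((hv p hp).const_mul 2).fun_mul (hφd p hp)))
    (fun p hp => by
      rw [← hΩ] at hp
      exact (((hu p hp).fun_mul (hus p hp)).const_sub z⁻¹).fun_add
        (((hu p hp).const_mul (2 * z⁻¹)).fun_mul (hφd p hp)))
    (fun x t h => by
      rw [← hΩ] at h
      exact ThirringData.pdx_pdt_eq (φ := fun x t => (y + S.G z x t) / S.F z x t)
        (hA x t h) (hB x t h) (hP x t h) hz
        (hu _ h) (hv _ h) (hus _ h) (hvs _ h) (hφx x t h) (hφt x t h))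
    (hΩ ▸ h₀) (hΩ ▸ hxt)
  have hζ0 : ζ ≠ 0 := by
    rintro rfl
    exact hz (by simp [← hζ])
  -- The exponent of `ψ₁` is `i` times the path integral of the closed one-form.
  have e1 : ∀ x t, ψ₁ x t = _ := fun x t => (hψ₁ x t).trans (by rw [← mul_add])
  have d1x := (hpath.1.const_mul I).cexp
  have d1t := (hpath.2.const_mul I).cexp
  simp only [← e1] at d1x d1t
  have d2x := (d1x.const_mul ζ⁻¹).fun_mul (hφx x t hxt)
  have d2t := (d1t.const_mul ζ⁻¹).fun_mul (hφt x t hxt)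
  have hF0 := hFne x t hxt
  have hyy := hy x t hxt
  subst hζ
  refine ⟨?_, ?_, ?_⟩
  · funext i
    fin_cases i
    · simp [ThirringData.Umat, Matrix.mulVec, dotProduct, Fin.sum_univ_two, hψ₂, d1x.deriv]
      field_simp
    · simp [ThirringData.Umat, Matrix.mulVec, dotProduct, Fin.sum_univ_two, hψ₂, d2x.deriv]
      field_simp
      ring
  · funext i
    fin_cases i
    · simp [ThirringData.Wmat, Matrix.mulVec, dotProduct, Fin.sum_univ_two, hψ₂, d1t.deriv]
      field_simp
    · simp [ThirringData.Wmat, Matrix.mulVec, dotProduct, Fin.sum_univ_two, hψ₂, d2t.deriv]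
      field_simp
      ring
  · funext i
    fin_cases i
    · simp [ThirringData.Vmat, Matrix.mulVec, dotProduct, Fin.sum_univ_two, hψ₂]
      field_simp
      ring
    · simp [ThirringData.Vmat, Matrix.mulVec, dotProduct, Fin.sum_univ_two, hψ₂]
      field_simp
      linear_combination ψ₁ x t * hyy
end
end

section
/- Assume the Thirring polynomial system holds on an open rectangle Ω = I × J ⊆ ℝ², with u, v, u⁎, v⁎ and all polynomial coefficients C¹ on Ω. Fix z ∈ ℂ\{0}, y ∈ ℂ with y² = G(z,x,t)² − z F(z,x,t) H(z,x,t) for all (x,t) ∈ Ω, suppose F(z,x,t) ≠ 0 on Ω, set φ(x,t) = (y + G(z,x,t))/F(z,x,t), fix (x₀,t₀) ∈ Ω, and define ψ₁(x,t) = exp( i ∫_{t₀}^{t} [ z⁻¹ − u(x₀,s)u⁎(x₀,s) + 2 z⁻¹ u(x₀,s) φ(x₀,s) ] ds + i ∫_{x₀}^{x} [ z − v(x',t)v⁎(x',t) + 2 v(x',t) φ(x',t) ] dx' ). Then for all (x,t) ∈ Ω: ψ₁(x,t)² F(z,x₀,t₀) = F(z,x,t) · exp( 4 i y z⁻¹ ∫_{t₀}^{t}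 u(x₀,s)/F(z,x₀,s) ds + 4 i y ∫_{x₀}^{x} v(x',t)/F(z,x',t) dx' ). -/
/-!
The whole argument is one-dimensional. Along a horizontal line the equation for `F_x`, divided
by `F`, says that `F_x / F = 2i (z - v v⁎ + 2 v φ) - 4iy v / F`, because `φ = (y + G) / F`; along
a vertical line the equation for `F_t` gives `F_t / F = 2i (z⁻¹ - u u⁎ + 2 z⁻¹ u φ) - 4iy z⁻¹ u / F`.
In both cases `F` solves a scalar linear ODE `g' = (2i w - k q) g` in which `w` is the integrand
of `log ψ₁` and `q` the integrand on the right-hand side of the claim, so that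
`exp (i ∫ w) ^ 2 * g s₀ = g s * exp (k ∫ q)` (`exp_sq_mul_eq_of_hasDerivAt`).
Applying this along the vertical segment from `(x₀, t₀)` to `(x₀, t)` and then along the
horizontal segment from `(x₀, t)` to `(x, t)`, and multiplying, gives the theorem.
-/

noncomputable section

open Complex

/-- The solution formula for `g' = (2i w - k q) g` on an open interval, with the two parts of the
coefficient kept on different sides of the equation. -/
theorem exp_sq_mul_eq_of_hasDerivAt {α β : ℝ} {g w q : ℝ → ℂ} {k : ℂ}
    (hw : ContinuousOn w (Set.Ioo α β)) (hq : ContinuousOn q (Set.Ioo α β))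
    (hg : ∀ s ∈ Set.Ioo α β, HasDerivAt g ((2 * I * w s - k * q s) * g s) s)
    {s₀ s : ℝ} (hs₀ : s₀ ∈ Set.Ioo α β) (hs : s ∈ Set.Ioo α β) :
    exp (I * ∫ r in s₀..s, w r) ^ 2 * g s₀ = g s * exp (k * ∫ r in s₀..s, q r) := by
  have ftc : ∀ {f : ℝ → ℂ}, ContinuousOn f (Set.Ioo α β) → ∀ r ∈ Set.Ioo α β,
      HasDerivAt (fun r => ∫ x in s₀..r, f x) (f r) r := by
    intro f hf r hr
    refine intervalIntegral.integral_hasDerivAt_right ?_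
      (hf.stronglyMeasurableAtFilter isOpen_Ioo r hr) (hf.continuousAt (isOpen_Ioo.mem_nhds hr))
    exact (hf.mono (Set.ordConnected_Ioo.uIcc_subset hs₀ hr)).intervalIntegrable
  -- `g` times its integrating factor is constant.
  have hE : ∀ r ∈ Set.Ioo α β, HasDerivAt
      (fun r => g r * exp (k * (∫ x in s₀..r, q x) - 2 * I * ∫ x in s₀..r, w x)) 0 r := by
    intro r hr
    refine ((hg r hr).mul
      (((ftc hq r hr).const_mul k).sub
        ((ftc hw r hr).const_mul (2 * I))).cexp).congr_deriv ?_
    simp only [Pi.sub_apply]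
    ring
  have hconst := isOpen_Ioo.is_const_of_deriv_eq_zero isPreconnected_Ioo
    (fun r hr => (hE r hr).differentiableAt.differentiableWithinAt)
    (fun r hr => (hE r hr).deriv) hs₀ hs
  simp only [intervalIntegral.integral_same, mul_zero, sub_zero, exp_zero, mul_one] at hconst
  rw [hconst, ← exp_nat_mul, mul_left_comm, ← exp_add]
  congr 2
  push_cast
  ring

namespace ThirringData

variable {n : ℕ} {Ω : Set (ℝ × ℝ)}

theorem hasDerivAt_F_x (S : ThirringData n Ω) (z : ℂ) {x t : ℝ} (h : (x, t) ∈ Ω) :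
    HasDerivAt (fun x' => S.F z x' t) (pdx (S.F z) x t) x :=
  DifferentiableAt.hasDerivAt <| DifferentiableAt.fun_sum fun _ _ =>
    (S.f_diff_x _ x t h).mul_const _

theorem hasDerivAt_F_t (S : ThirringData n Ω) (z : ℂ) {x t : ℝ} (h : (x, t) ∈ Ω) :
    HasDerivAt (fun t' => S.F z x t') (pdt (S.F z) x t) t :=
  DifferentiableAt.hasDerivAt <| DifferentiableAt.fun_sum fun _ _ =>
    (S.f_diff_t _ x t h).mul_const _

end ThirringData

/-- on an open rectangle `Ω = I × J`, with `C¹` data, the function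
`ψ₁` satisfies
`ψ₁² F(z,x₀,t₀) = F(z,x,t) exp(4iyz⁻¹ ∫_{t₀}^t u(x₀,s)/F(z,x₀,s) ds
+ 4iy ∫_{x₀}^x v(x',t)/F(z,x',t) dx')`. -/
theorem statement7 {n : ℕ} (a b c d : ℝ) {Ω : Set (ℝ × ℝ)}
    (hΩ : Ω = Set.Ioo a b ×ˢ Set.Ioo c d)
    (S : ThirringData n Ω) (hsys : S.System)
    (hfC1 : ∀ j : ℕ, ContDiffOn ℝ 1 (fun p : ℝ × ℝ => S.f j p.1 p.2) Ω)
    (hhC1 : ∀ j : ℕ, ContDiffOn ℝ 1 (fun p : ℝ × ℝ => S.h j p.1 p.2) Ω)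
    (hgC1 : ∀ j : ℕ, ContDiffOn ℝ 1 (fun p : ℝ × ℝ => S.gc j p.1 p.2) Ω)
    (huC1 : ContDiffOn ℝ 1 (fun p : ℝ × ℝ => S.u p.1 p.2) Ω)
    (hvC1 : ContDiffOn ℝ 1 (fun p : ℝ × ℝ => S.v p.1 p.2) Ω)
    (husC1 : ContDiffOn ℝ 1 (fun p : ℝ × ℝ => S.us p.1 p.2) Ω)
    (hvsC1 : ContDiffOn ℝ 1 (fun p : ℝ × ℝ => S.vs p.1 p.2) Ω)
    (z : ℂ) (hz : z ≠ 0) (y : ℂ)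
    (hy : ∀ x t : ℝ, (x, t) ∈ Ω → y ^ 2 = S.G z x t ^ 2 - z * S.F z x t * S.Hp z x t)
    (hFne : ∀ x t : ℝ, (x, t) ∈ Ω → S.F z x t ≠ 0)
    (x₀ t₀ : ℝ) (h₀ : (x₀, t₀) ∈ Ω)
    (φ : ℝ → ℝ → ℂ)
    (hφ : ∀ x t : ℝ, φ x t = (y + S.G z x t) / S.F z x t)
    (ψ₁ : ℝ → ℝ → ℂ)
    (hψ₁ : ∀ x t : ℝ, ψ₁ x t = Complex.exp
      (I * (∫ s in t₀..t, (z⁻¹ - S.u x₀ s * S.us x₀ s + 2 * z⁻¹ * S.u x₀ s * φ x₀ s)) +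
       I * (∫ x' in x₀..x, (z - S.v x' t * S.vs x' t + 2 * S.v x' t * φ x' t)))) :
    ∀ x t : ℝ, (x, t) ∈ Ω →
      ψ₁ x t ^ 2 * S.F z x₀ t₀ =
        S.F z x t * Complex.exp
          (4 * I * y * z⁻¹ * (∫ s in t₀..t, S.u x₀ s / S.F z x₀ s) +
           4 * I * y * (∫ x' in x₀..x, S.v x' t / S.F z x' t)) := by
  subst hΩ
  obtain ⟨hFx, -, -, hFt, -, -⟩ := hsys
  intro x t hxt
  obtain ⟨hx₀, ht₀⟩ := h₀
  obtain ⟨hx, ht⟩ := hxt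
  simp only at hx₀ ht₀ hx ht
  have hFc : ContinuousOn (fun p : ℝ × ℝ => S.F z p.1 p.2) (Set.Ioo a b ×ˢ Set.Ioo c d) :=
    continuousOn_finsetSum _ fun j _ => (hfC1 _).continuousOn.mul continuousOn_const
  have hGc : ContinuousOn (fun p : ℝ × ℝ => S.G z p.1 p.2) (Set.Ioo a b ×ˢ Set.Ioo c d) :=
    continuousOn_finsetSum _ fun j _ => (hgC1 _).continuousOn.mul continuousOn_const
  have hφc : ContinuousOn (fun p : ℝ × ℝ => φ p.1 p.2) (Set.Ioo a b ×ˢ Set.Ioo c d) := by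
    simp only [hφ]
    exact (continuousOn_const.add hGc).div hFc fun p hp => hFne p.1 p.2 hp
  have restr_x : ∀ {f : ℝ → ℝ → ℂ},
      ContinuousOn (fun p : ℝ × ℝ => f p.1 p.2) (Set.Ioo a b ×ˢ Set.Ioo c d) →
      ContinuousOn (fun r => f r t) (Set.Ioo a b) := fun hf =>
    hf.comp (f := fun r : ℝ => (r, t)) (by fun_prop) fun r hr => ⟨hr, ht⟩
  have restr_t : ∀ {f : ℝ → ℝ → ℂ},
      ContinuousOn (fun p : ℝ × ℝ => f p.1 p.2) (Set.Ioo a b ×ˢ Set.Ioo c d) →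
      ContinuousOn (fun r => f x₀ r) (Set.Ioo c d) := fun hf =>
    hf.comp (f := fun r : ℝ => (x₀, r)) (by fun_prop) fun r hr => ⟨hx₀, hr⟩
  have hX := exp_sq_mul_eq_of_hasDerivAt (g := fun r => S.F z r t)
    (w := fun r => z - S.v r t * S.vs r t + 2 * S.v r t * φ r t)
    (q := fun r => S.v r t / S.F z r t) (k := 4 * I * y)
    ((continuousOn_const.sub
        ((restr_x hvC1.continuousOn).mul (restr_x hvsC1.continuousOn))).add
      ((continuousOn_const.mul (restr_x hvC1.continuousOn)).mul (restr_x hφc)))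
    ((restr_x hvC1.continuousOn).div (restr_x hFc)
      fun r hr => hFne _ _ ⟨hr, ht⟩)
    (fun r hr => by
      have hF := hFne r t ⟨hr, ht⟩
      refine (S.hasDerivAt_F_x z ⟨hr, ht⟩).congr_deriv ?_
      rw [hFx z r t ⟨hr, ht⟩, hφ]
      field_simp
      ring) hx₀ hx
  have hT := exp_sq_mul_eq_of_hasDerivAt (g := fun r => S.F z x₀ r)
    (w := fun r => z⁻¹ - S.u x₀ r * S.us x₀ r + 2 * z⁻¹ * S.u x₀ r * φ x₀ r)
    (q := fun r => S.u x₀ r / S.F z x₀ r) (k := 4 * I * y * z⁻¹)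
    ((continuousOn_const.sub
        ((restr_t huC1.continuousOn).mul (restr_t husC1.continuousOn))).add
      ((continuousOn_const.mul (restr_t huC1.continuousOn)).mul (restr_t hφc)))
    ((restr_t huC1.continuousOn).div (restr_t hFc)
      fun r hr => hFne _ _ ⟨hx₀, hr⟩)
    (fun r hr => by
      have hF := hFne x₀ r ⟨hx₀, hr⟩
      refine (S.hasDerivAt_F_t z ⟨hx₀, hr⟩).congr_deriv ?_
      apply mul_left_cancel₀ hz
      rw [hFt z x₀ r ⟨hx₀, hr⟩, hφ]
      field_simp
      ring) ht₀ ht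
  rw [hψ₁, exp_add, exp_add, mul_pow, mul_right_comm, hT, mul_right_comm, mul_comm (S.F z x₀ t),
    hX]
  ring
end
end

section
/- Let n ∈ ℕ and assume the Thirring polynomial system holds on Ω. Suppose F(z,x,t) = −2 v(x,t) ∏_{j=1}^n (z − μ_j(x,t)) where v : Ω → ℂ is nonvanishing, the μ_j : Ω → ℂ are differentiable and pairwise distinct on Ω, each μ_j is nonvanishing, and g_{n+1} := G(0,·,·) is nonvanishing. Then for each j ∈ {1,…,n} and (x,t) ∈ Ω the Dubrovin-type equations hold: μ_{j,x}(x,t) · ∏_{ℓ≠j}(μ_j(x,t) − μ_ℓ(x,t)) = 2i G(μ_j(x,t), x, t), and μ_{j,t}(x,t) · ∏_{ℓ≠j}(μ_j(x,t) − μ_ℓ(x,t)) = 2i (−1)^n g_{n+1}(x,t)⁻¹ (∏_{k≠j} μ_k(x,t)) · G(μ_j(x,t), x, t). -/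
/-!
The derivative of `F = -2 v ∏ (z - μ_k)` in `x` or `t`, evaluated at its zero `z = μ_j`, retains only
the term in which the factor `z - μ_j` is differentiated: it is `2 v μ_j' ∏_{ℓ ≠ j} (μ_j - μ_ℓ)`
(`deriv_factored_at_root`). The system evaluated at `z = μ_j` says that this equals `4 i v G(μ_j)`
for the `x`-derivative, and `4 i u G(μ_j) / μ_j` for the `t`-derivative. Dividing by `2 v` gives the
first equation. For the second, `u` is eliminated by means of the `t`-equation for `F` at `z = 0`,
which reads `F(0) = -2 u G(0)`, that is `u G(0) = (-1)^n v ∏ μ_k`.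

The product rule needs `v` to be differentiable. This holds because
`v = -F(z₀) / (2 ∏ (z₀ - μ_k))` near the given point, for any `z₀` distinct from all `μ_k` there.
-/

noncomputable section

open Complex

/-- Differentiability of the leading factor `w` is not assumed: it follows from the
differentiability of `φ z` for one `z` that is not a root at `s₀`. -/
lemma deriv_factored_at_root {n : ℕ} (φ : ℂ → ℝ → ℂ) (w : ℝ → ℂ) (m : Fin n → ℝ → ℂ) (s₀ : ℝ)
    (hφ : ∀ z, DifferentiableAt ℝ (φ z) s₀) (hm : ∀ j, DifferentiableAt ℝ (m j) s₀)
    (hfac : ∀ᶠ s in nhds s₀, ∀ z, φ z s = -2 * w s * ∏ k, (z - m k s)) (j : Fin n) :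
    deriv (φ (m j s₀)) s₀
      = 2 * w s₀ * (deriv (m j) s₀ * ∏ ℓ ∈ Finset.univ.erase j, (m j s₀ - m ℓ s₀)) := by
  have hw : DifferentiableAt ℝ w s₀ := by
    obtain ⟨z₀, hz₀⟩ := (Set.finite_range fun k => m k s₀).exists_notMem
    have hP : DifferentiableAt ℝ (fun s => ∏ k, (z₀ - m k s)) s₀ :=
      DifferentiableAt.fun_finsetProd fun k _ => (hm k).const_sub z₀
    have hP0 : ∏ k, (z₀ - m k s₀) ≠ 0 :=
      Finset.prod_ne_zero_iff.2 fun k _ => sub_ne_zero.2 fun h => hz₀ ⟨k, h.symm⟩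
    refine DifferentiableAt.congr_of_eventuallyEq
      (((hφ z₀).div hP hP0).const_mul (-(1 / 2) : ℂ)) ?_
    filter_upwards [hfac, hP.continuousAt.eventually_ne hP0] with s hs hs0
    simp only [Pi.div_apply, hs z₀]
    field_simp
  have hA : DifferentiableAt ℝ
      (fun s => -2 * w s * ∏ ℓ ∈ Finset.univ.erase j, (m j s₀ - m ℓ s)) s₀ :=
    (hw.const_mul _).mul (DifferentiableAt.fun_finsetProd fun k _ => (hm k).const_sub _)
  have hD := hA.hasDerivAt.mul ((hm j).hasDerivAt.const_sub (m j s₀))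
  have heq : φ (m j s₀) =ᶠ[nhds s₀] (fun s =>
      -2 * w s * ∏ ℓ ∈ Finset.univ.erase j, (m j s₀ - m ℓ s)) * (fun s => m j s₀ - m j s) := by
    filter_upwards [hfac] with s hs
    rw [hs, ← Finset.prod_erase_mul _ _ (Finset.mem_univ j), Pi.mul_apply]
    ring
  rw [heq.deriv_eq, hD.deriv]
  ring

/-- Dubrovin-type equations for the zeros `μ_j` of `F`. -/
theorem statement10 {n : ℕ} (hn : 0 < n) {Ω : Set (ℝ × ℝ)} (hΩ : IsOpen Ω)
    (S : ThirringData n Ω) (hsys : S.System)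
    (μ : Fin n → ℝ → ℝ → ℂ)
    (hFfac : ∀ (z : ℂ) (x t : ℝ), (x, t) ∈ Ω →
      S.F z x t = -2 * S.v x t * ∏ j, (z - μ j x t))
    (hv : ∀ x t : ℝ, (x, t) ∈ Ω → S.v x t ≠ 0)
    (hμ_x : ∀ (j : Fin n) (x t : ℝ), (x, t) ∈ Ω →
      DifferentiableAt ℝ (fun x' => μ j x' t) x)
    (hμ_t : ∀ (j : Fin n) (x t : ℝ), (x, t) ∈ Ω →
      DifferentiableAt ℝ (fun t' => μ j x t') t)
    (hdist : ∀ j k : Fin n, j ≠ k → ∀ x t : ℝ, (x, t) ∈ Ω → μ j x t ≠ μ k x t)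
    (hμ0 : ∀ (j : Fin n) (x t : ℝ), (x, t) ∈ Ω → μ j x t ≠ 0)
    (hg : ∀ x t : ℝ, (x, t) ∈ Ω → S.G 0 x t ≠ 0) :
    ∀ (j : Fin n) (x t : ℝ), (x, t) ∈ Ω →
      (pdx (μ j) x t * ∏ ℓ ∈ Finset.univ.erase j, (μ j x t - μ ℓ x t)
          = 2 * I * S.G (μ j x t) x t) ∧
      (pdt (μ j) x t * ∏ ℓ ∈ Finset.univ.erase j, (μ j x t - μ ℓ x t)
          = 2 * I * ((-1 : ℂ) ^ n * (S.G 0 x t)⁻¹ *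
              ∏ k ∈ Finset.univ.erase j, μ k x t) * S.G (μ j x t) x t) := by
  obtain ⟨hFx, -, -, hFt, -, -⟩ := hsys
  intro j x t hxt
  have hv0 := hv x t hxt
  have hroot : S.F (μ j x t) x t = 0 := by
    rw [hFfac _ x t hxt, Finset.prod_eq_zero (Finset.mem_univ j) (sub_self _), mul_zero]
  constructor
  · have hΩx : ∀ᶠ x' in nhds x, (x', t) ∈ Ω :=
      (continuous_id.prodMk continuous_const).continuousAt.eventually_mem (hΩ.mem_nhds hxt)
    have hd := deriv_factored_at_root (fun z x' => S.F z x' t) (fun x' => S.v x' t)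
      (fun k x' => μ k x' t) x
      (fun z => DifferentiableAt.fun_sum fun k _ => (S.f_diff_x _ x t hxt).mul_const _)
      (fun k => hμ_x k x t hxt) (hΩx.mono fun x' hx' z => hFfac z x' t hx') j
    have he := hFx (μ j x t) x t hxt
    rw [hroot] at he
    unfold pdx at he ⊢
    rw [hd] at he
    refine mul_left_cancel₀ (mul_ne_zero two_ne_zero hv0) ?_
    linear_combination he
  · have hΩt : ∀ᶠ t' in nhds t, (x, t') ∈ Ω :=
      (continuous_const.prodMk continuous_id).continuousAt.eventually_mem (hΩ.mem_nhds hxt)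
    have hd := deriv_factored_at_root (fun z t' => S.F z x t') (fun t' => S.v x t')
      (fun k t' => μ k x t') t
      (fun z => DifferentiableAt.fun_sum fun k _ => (S.f_diff_t _ x t hxt).mul_const _)
      (fun k => hμ_t k x t hxt) (hΩt.mono fun t' ht' z => hFfac z x t' ht') j
    have he := hFt (μ j x t) x t hxt
    rw [hroot] at he
    have hu : S.u x t * S.G 0 x t
        = (-1) ^ n * S.v x t * (μ j x t * ∏ k ∈ Finset.univ.erase j, μ k x t) := by
      have h0 := hFt 0 x t hxt
      have hF0 : S.F 0 x t = -2 * S.v x t * ((-1) ^ n * ∏ k, μ k x t) := by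
        rw [hFfac 0 x t hxt]
        simp [Finset.prod_neg]
      rw [hF0] at h0
      rw [Finset.mul_prod_erase _ (fun k => μ k x t) (Finset.mem_univ j)]
      refine mul_left_cancel₀ (mul_ne_zero (by norm_num : (4 : ℂ) ≠ 0) I_ne_zero) ?_
      linear_combination -h0
    have hg0 := hg x t hxt
    unfold pdt at he ⊢
    rw [hd] at he
    refine mul_left_cancel₀ (mul_ne_zero (mul_ne_zero (mul_ne_zero two_ne_zero hv0)
      (hμ0 j x t hxt)) hg0) ?_
    linear_combination S.G 0 x t * he + 4 * I * S.G (μ j x t) x t * hu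
      - 4 * I * S.v x t * μ j x t * (-1) ^ n * (∏ k ∈ Finset.univ.erase j, μ k x t)
        * S.G (μ j x t) x t * mul_inv_cancel₀ hg0
end
end

section
/- Let n ∈ ℕ and assume the Thirring polynomial system holds on Ω. Suppose H(z,x,t) = 2 v⁎(x,t) ∏_{j=1}^n (z − ν_j(x,t)) where v⁎ : Ω → ℂ is nonvanishing, the ν_j : Ω → ℂ are differentiable and pairwise distinct on Ω, each ν_j is nonvanishing, and g_{n+1} := G(0,·,·) is nonvanishing. Then for each j ∈ {1,…,n} and (x,t) ∈ Ω the Dubrovin-type equations hold: ν_{j,x}(x,t) · ∏_{ℓ≠j}(ν_j(x,t) − ν_ℓ(x,t)) = −2i G(ν_j(x,t), x, t), and ν_{j,t}(x,t) · ∏_{ℓ≠j}(ν_j(x,t) − ν_ℓ(x,t)) = −2i (−1)^n g_{n+1}(x,t)⁻¹ (∏_{k≠j} ν_k(x,t)) · G(ν_j(x,t), x, t). -/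
/-!
At a point of `Ω` freeze `z = ν_j(x,t)` and differentiate `H(z,·) = 2 v⁎ ∏ (z - ν_ℓ)`. Only the
term hitting the vanishing factor survives, giving `-2 v⁎ ν_j' ∏_{ℓ≠j} (ν_j - ν_ℓ)`
(`deriv_eq_of_factorization`). The evolution equations of `H` at its zero `z = ν_j` read
`H_x = 4i v⁎ G` and `ν_j H_t = 4i u⁎ G`; comparing gives the `x`-equation after cancelling `v⁎`,
and the `t`-equation with the factor `u⁎ / (v⁎ ν_j)`. That factor is evaluated from the `t`-equation
for `H` at `z = 0`, which forces `H(0) = 2 u⁎ G(0)`, i.e. `u⁎ G(0) = (-1)^n v⁎ ∏ ν_k`.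
-/

noncomputable section

open Complex

/-- Derivative of a factorized polynomial, with one-parameter dependence of its leading coefficient
and zeros, evaluated at a frozen zero. Differentiability of the leading coefficient `a` is not
assumed: it follows from that of `P z` for any `z` that is not a zero. -/
lemma deriv_eq_of_factorization {n : ℕ} (P : ℂ → ℝ → ℂ) (a : ℝ → ℂ) (μ : Fin n → ℝ → ℂ) (s : ℝ)
    (hP : ∀ z, DifferentiableAt ℝ (P z) s)
    (hfac : ∀ z, P z =ᶠ[nhds s] fun r => a r * ∏ j, (z - μ j r))
    (hμ : ∀ j, DifferentiableAt ℝ (μ j) s) (j : Fin n) :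
    deriv (P (μ j s)) s =
      -(a s * deriv (μ j) s * ∏ ℓ ∈ Finset.univ.erase j, (μ j s - μ ℓ s)) := by
  have hprod : ∀ (A : Finset (Fin n)) (z : ℂ),
      DifferentiableAt ℝ (fun r => ∏ ℓ ∈ A, (z - μ ℓ r)) s := fun A z =>
    DifferentiableAt.fun_finsetProd fun ℓ _ => (hμ ℓ).const_sub z
  have ha : DifferentiableAt ℝ a s := by
    obtain ⟨z, hz⟩ := (Set.finite_range fun ℓ => μ ℓ s).exists_notMem
    have hne : ∏ ℓ, (z - μ ℓ s) ≠ 0 :=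
      Finset.prod_ne_zero_iff.2 fun ℓ _ h => hz ⟨ℓ, (sub_eq_zero.1 h).symm⟩
    refine ((hP z).fun_div (hprod Finset.univ z) hne).congr_of_eventuallyEq ?_
    filter_upwards [hfac z, (hprod Finset.univ z).continuousAt.eventually_ne hne] with r h1 h2
    rw [h1, mul_div_cancel_right₀ _ h2]
  have hsplit : P (μ j s) =ᶠ[nhds s] fun r =>
      (μ j s - μ j r) * (a r * ∏ ℓ ∈ Finset.univ.erase j, (μ j s - μ ℓ r)) := by
    filter_upwards [hfac (μ j s)] with r h
    rw [h, ← Finset.mul_prod_erase _ _ (Finset.mem_univ j)]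
    ring
  have hd := ((hμ j).hasDerivAt.const_sub (μ j s)).mul
    (ha.fun_mul (hprod (Finset.univ.erase j) (μ j s))).hasDerivAt
  rw [hsplit.deriv_eq]
  refine hd.deriv.trans ?_
  simp only [sub_self]
  ring

/-- Dubrovin-type equations for the zeros `ν_j` of `H`. -/
theorem statement11 {n : ℕ} (hn : 0 < n) {Ω : Set (ℝ × ℝ)} (hΩ : IsOpen Ω)
    (S : ThirringData n Ω) (hsys : S.System)
    (ν : Fin n → ℝ → ℝ → ℂ)
    (hHfac : ∀ (z : ℂ) (x t : ℝ), (x, t) ∈ Ω →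
      S.Hp z x t = 2 * S.vs x t * ∏ j, (z - ν j x t))
    (hvs : ∀ x t : ℝ, (x, t) ∈ Ω → S.vs x t ≠ 0)
    (hν_x : ∀ (j : Fin n) (x t : ℝ), (x, t) ∈ Ω →
      DifferentiableAt ℝ (fun x' => ν j x' t) x)
    (hν_t : ∀ (j : Fin n) (x t : ℝ), (x, t) ∈ Ω →
      DifferentiableAt ℝ (fun t' => ν j x t') t)
    (hdist : ∀ j k : Fin n, j ≠ k → ∀ x t : ℝ, (x, t) ∈ Ω → ν j x t ≠ ν k x t)
    (hν0 : ∀ (j : Fin n) (x t : ℝ), (x, t) ∈ Ω → ν j x t ≠ 0)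
    (hg : ∀ x t : ℝ, (x, t) ∈ Ω → S.G 0 x t ≠ 0) :
    ∀ (j : Fin n) (x t : ℝ), (x, t) ∈ Ω →
      (pdx (ν j) x t * ∏ ℓ ∈ Finset.univ.erase j, (ν j x t - ν ℓ x t)
          = -2 * I * S.G (ν j x t) x t) ∧
      (pdt (ν j) x t * ∏ ℓ ∈ Finset.univ.erase j, (ν j x t - ν ℓ x t)
          = -2 * I * ((-1 : ℂ) ^ n * (S.G 0 x t)⁻¹ *
              ∏ k ∈ Finset.univ.erase j, ν k x t) * S.G (ν j x t) x t) := by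
  intro j x t hxt
  obtain ⟨-, -, hHx, -, -, hHt⟩ := hsys
  have hx : ∀ᶠ r in nhds x, (r, t) ∈ Ω :=
    (by fun_prop : ContinuousAt (fun r : ℝ => (r, t)) x).eventually (hΩ.mem_nhds hxt)
  have ht : ∀ᶠ r in nhds t, (x, r) ∈ Ω :=
    (by fun_prop : ContinuousAt (fun r : ℝ => (x, r)) t).eventually (hΩ.mem_nhds hxt)
  have hroot : S.Hp (ν j x t) x t = 0 := by
    rw [hHfac _ x t hxt, Finset.prod_eq_zero (Finset.mem_univ j) (sub_self _), mul_zero]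
  have dx := deriv_eq_of_factorization (fun z r => S.Hp z r t) (fun r => 2 * S.vs r t)
    (fun k r => ν k r t) x
    (fun z => DifferentiableAt.fun_sum fun k _ => (S.h_diff_x (n - k) x t hxt).mul_const _)
    (fun z => hx.mono fun r hr => hHfac z r t hr) (fun k => hν_x k x t hxt) j
  have dt := deriv_eq_of_factorization (fun z r => S.Hp z x r) (fun r => 2 * S.vs x r)
    (fun k r => ν k x r) t
    (fun z => DifferentiableAt.fun_sum fun k _ => (S.h_diff_t (n - k) x t hxt).mul_const _)
    (fun z => ht.mono fun r hr => hHfac z x r hr) (fun k => hν_t k x t hxt) j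
  have ex := hHx (ν j x t) x t hxt
  have et := hHt (ν j x t) x t hxt
  have e0 := hHt 0 x t hxt
  simp only [pdx, pdt] at ex et ⊢
  rw [hroot, dx] at ex
  rw [hroot, dt] at et
  have hv := hvs x t hxt
  have hn0 := hν0 j x t hxt
  have hG := hg x t hxt
  have hH0 : S.Hp 0 x t =
      2 * S.vs x t * ((-1) ^ n * (ν j x t * ∏ k ∈ Finset.univ.erase j, ν k x t)) := by
    rw [hHfac 0 x t hxt, Finset.mul_prod_erase _ (fun k => ν k x t) (Finset.mem_univ j)]
    simp [Finset.prod_neg]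
  -- `z = 0` in the `t`-equation of `H` relates `u⁎` to `v⁎` and the product of all zeros.
  have hus : S.us x t * S.G 0 x t =
      S.vs x t * ((-1) ^ n * (ν j x t * ∏ k ∈ Finset.univ.erase j, ν k x t)) := by
    rw [hH0] at e0
    apply mul_left_cancel₀ (mul_ne_zero (by norm_num : (4 : ℂ) ≠ 0) I_ne_zero)
    linear_combination -e0
  constructor
  · apply mul_left_cancel₀ (mul_ne_zero (two_ne_zero' ℂ) hv)
    linear_combination -ex
  · apply mul_left_cancel₀ (mul_ne_zero (mul_ne_zero (two_ne_zero' ℂ) hv) (mul_ne_zero hn0 hG))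
    linear_combination (-S.G 0 x t) * et - 4 * I * S.G (ν j x t) x t * hus
      + 4 * I * S.vs x t * ν j x t * (-1) ^ n * (∏ k ∈ Finset.univ.erase j, ν k x t)
        * S.G (ν j x t) x t * mul_inv_cancel₀ hG
end
end
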